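/- arXiv:1202.4539 — 2 statements merged into one kernel-verified Lean document; each statement's English description precedes it below -/
import Mathlib

section
/- Let θ^1, θ^2, θ^3 be real numbers linearly independent over ℚ together with 1. Define ψ(t) = min over integer vectors (x_1, x_2, x_3) with 0 < max(|x_1|, |x_2|, |x_3|) ≤ t of ‖θ^1 x_1 + θ^2 x_2 + θ^3 x_3‖, and set ω = sup{ γ ≥ 0 : liminf_{t→∞} t^γ ψ(t) < ∞ } and ω̂ = sup{ γ ≥ 0 : limsup_{t→∞} t^γ ψ(t) < ∞ } (here ω̂ ≥ 3). Then ω ≥ ω̂ · ( √( ω̂ + 1/ω̂² − 7/4 ) + 1/ω̂ − 1/2 ). -/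
open Filter

/-- Distance from a real number to the nearest integer. -/
noncomputable def nint (x : ℝ) : ℝ := |x - round x|

/-- The irrationality measure function for a linear form in three variables:
`psiL3 θ t = min_{x ∈ ℤ³, 0 < max|x_j| ≤ t} ‖θ¹x₁ + θ²x₂ + θ³x₃‖`. -/
noncomputable def psiL3 (θ : Fin 3 → ℝ) (t : ℝ) : ℝ :=
  sInf {v : ℝ | ∃ x₁ x₂ x₃ : ℤ, 0 < max |x₁| (max |x₂| |x₃|) ∧
    ((max |x₁| (max |x₂| |x₃|) : ℤ) : ℝ) ≤ t ∧
    v = nint (θ 0 * x₁ + θ 1 * x₂ + θ 2 * x₃)}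

namespace MinimalPoints

/-- The value of the affine form `1, θ¹, θ², θ³` at an integer vector. -/
noncomputable def linForm (θ : Fin 3 → ℝ) (X : Fin 4 → ℤ) : ℝ :=
  X 0 + θ 0 * X 1 + θ 1 * X 2 + θ 2 * X 3

/-- The sup norm of the last three coordinates. -/
def height (X : Fin 4 → ℤ) : ℤ := max |X 1| (max |X 2| |X 3|)

/-- The integer vector `X` with its first coordinate replaced by the value of the form. -/
noncomputable def formVec (θ : Fin 3 → ℝ) (X : Fin 4 → ℤ) : Fin 4 → ℝ :=
  ![linForm θ X, X 1, X 2, X 3]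

variable {θ : Fin 3 → ℝ}

lemma linForm_comb (a b c : ℤ) (X Y Z : Fin 4 → ℤ) :
    linForm θ (a • X + b • Y + c • Z) = a * linForm θ X + b * linForm θ Y + c * linForm θ Z := by
  simp [linForm]; ring

lemma formVec_comb (a b c : ℤ) (X Y Z : Fin 4 → ℤ) :
    formVec θ (a • X + b • Y + c • Z)
      = (a : ℝ) • formVec θ X + (b : ℝ) • formVec θ Y + (c : ℝ) • formVec θ Z := by
  ext i
  fin_cases i
  · exact (linForm_comb a b c X Y Z)
  all_goals simp [formVec]

lemma height_nonneg (X : Fin 4 → ℤ) : 0 ≤ height X := le_max_of_le_left (abs_nonneg _)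

lemma abs_formVec_succ_le (X : Fin 4 → ℤ) (j : Fin 3) :
    |formVec θ X j.succ| ≤ height X := by
  have h : ∀ k : Fin 3, |X k.succ| ≤ height X := by
    intro k; fin_cases k <;> simp [height]
  have := h j
  have h2 : formVec θ X j.succ = X j.succ := by fin_cases j <;> simp [formVec]
  rw [h2]; exact_mod_cast this

lemma exists_abs_formVec_eq (X : Fin 4 → ℤ) :
    ∃ j : Fin 3, |formVec θ X j.succ| = height X := by
  have h : ∃ k : Fin 3, |X k.succ| = height X := by
    rcases max_choice |X 1| (max |X 2| |X 3|) with h | h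
    · exact ⟨0, by simp [height, h]⟩
    · rcases max_choice |X 2| |X 3| with h' | h'
      · exact ⟨1, by rw [height, h, h']; rfl⟩
      · exact ⟨2, by rw [height, h, h']; rfl⟩
  obtain ⟨j, hj⟩ := h
  refine ⟨j, ?_⟩
  have h2 : formVec θ X j.succ = X j.succ := by fin_cases j <;> simp [formVec]
  rw [h2]; exact_mod_cast hj

lemma height_le_of_formVec {X : Fin 4 → ℤ} {r : ℝ} (h : ∀ j : Fin 3, |formVec θ X j.succ| ≤ r) :
    (height X : ℝ) ≤ r := by
  obtain ⟨j, hj⟩ := exists_abs_formVec_eq (θ := θ) X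
  exact hj ▸ h j

lemma eq_zero_of_height_eq_zero {X : Fin 4 → ℤ} (h : height X = 0) (hX : |linForm θ X| < 1) :
    X = 0 := by
  have h1 : |X 1| ≤ 0 := h ▸ le_max_left _ _
  have h2 : |X 2| ≤ 0 := h ▸ le_max_of_le_right (le_max_left _ _)
  have h3 : |X 3| ≤ 0 := h ▸ le_max_of_le_right (le_max_right _ _)
  rw [abs_nonpos_iff] at h1 h2 h3
  have h0 : X 0 = 0 := by
    rw [← Int.abs_lt_one_iff]
    simp only [linForm, h1, h2, h3] at hX
    simp only [Int.cast_zero, mul_zero, add_zero] at hX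
    exact_mod_cast hX
  ext i
  fin_cases i <;> assumption

lemma linForm_ne_zero (hindep : LinearIndependent ℚ ![(1 : ℝ), θ 0, θ 1, θ 2])
    {X : Fin 4 → ℤ} (hX : 0 < height X) : linForm θ X ≠ 0 := by
  intro h
  have key := Fintype.linearIndependent_iff.1 hindep (fun i => (X i : ℚ)) (by
    simp only [Fin.sum_univ_four, Rat.smul_def]
    rw [← h, linForm]
    simp
    ring)
  have h0 : X = 0 := by
    ext i
    exact_mod_cast key i
  simp [h0, height] at hX

lemma nint_le_abs_linForm (X : Fin 4 → ℤ) :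
    nint (θ 0 * X 1 + θ 1 * X 2 + θ 2 * X 3) ≤ |linForm θ X| := by
  have := round_le (θ 0 * X 1 + θ 1 * X 2 + θ 2 * X 3) (-X 0)
  refine this.trans (le_of_eq ?_)
  rw [linForm]; push_cast; ring_nf

lemma exists_abs_linForm_eq_nint (x₁ x₂ x₃ : ℤ) :
    ∃ n : ℤ, |linForm θ ![n, x₁, x₂, x₃]| = nint (θ 0 * x₁ + θ 1 * x₂ + θ 2 * x₃) := by
  refine ⟨-round (θ 0 * x₁ + θ 1 * x₂ + θ 2 * x₃), ?_⟩
  rw [linForm, nint]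
  simp only [Matrix.cons_val]
  push_cast; ring_nf

lemma psiL3_le_abs_linForm {X : Fin 4 → ℤ} (hX : 0 < height X) {t : ℝ} (ht : height X ≤ t) :
    psiL3 θ t ≤ |linForm θ X| := by
  refine le_trans (csInf_le ⟨0, ?_⟩ ⟨X 1, X 2, X 3, hX, ht, rfl⟩) (nint_le_abs_linForm X)
  rintro v ⟨x₁, x₂, x₃, -, -, rfl⟩
  exact abs_nonneg _

lemma psiL3_set_nonempty {t : ℝ} (ht : 1 ≤ t) :
    {v : ℝ | ∃ x₁ x₂ x₃ : ℤ, 0 < max |x₁| (max |x₂| |x₃|) ∧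
    ((max |x₁| (max |x₂| |x₃|) : ℤ) : ℝ) ≤ t ∧
    v = nint (θ 0 * x₁ + θ 1 * x₂ + θ 2 * x₃)}.Nonempty :=
  ⟨_, 1, 0, 0, by simp, by simpa using ht, rfl⟩

lemma le_psiL3 {t : ℝ} (ht : 1 ≤ t) {r : ℝ}
    (h : ∀ Y : Fin 4 → ℤ, 0 < height Y → height Y ≤ t → r ≤ |linForm θ Y|) : r ≤ psiL3 θ t := by
  refine le_csInf (psiL3_set_nonempty ht) ?_
  rintro v ⟨x₁, x₂, x₃, h1, h2, rfl⟩
  obtain ⟨n, hn⟩ := exists_abs_linForm_eq_nint (θ := θ) x₁ x₂ x₃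
  rw [← hn]
  exact h _ h1 h2

/-- Among the vectors of positive height at most `n` one minimizes the form. -/
lemma exists_min_linForm (θ : Fin 3 → ℝ) {n : ℤ} (hn : 1 ≤ n) :
    ∃ X : Fin 4 → ℤ, 0 < height X ∧ height X ≤ n ∧ |linForm θ X| ≤ 1 / 2 ∧
      ∀ Y : Fin 4 → ℤ, 0 < height Y → height Y ≤ n → |linForm θ X| ≤ |linForm θ Y| := by
  have hfin : {x : ℤ × ℤ × ℤ | 0 < max |x.1| (max |x.2.1| |x.2.2|) ∧
      max |x.1| (max |x.2.1| |x.2.2|) ≤ n}.Finite := by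
    refine ((Set.finite_Icc (-n) n).prod ((Set.finite_Icc (-n) n).prod
      (Set.finite_Icc (-n) n))).subset ?_
    rintro ⟨x, y, z⟩ ⟨-, h⟩
    simp only [max_le_iff, abs_le] at h
    exact ⟨h.1, h.2.1, h.2.2⟩
  obtain ⟨⟨x, y, z⟩, ⟨h1, h2⟩, h3⟩ := Set.exists_min_image _
    (fun x : ℤ × ℤ × ℤ => nint (θ 0 * x.1 + θ 1 * x.2.1 + θ 2 * x.2.2)) hfin
    ⟨(1, 0, 0), by simp, by simpa using hn⟩
  obtain ⟨k, hk⟩ := exists_abs_linForm_eq_nint (θ := θ) x y z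
  refine ⟨![k, x, y, z], h1, h2, hk.le.trans (abs_sub_round _), fun Y hY hYn => ?_⟩
  rw [hk]
  have := h3 (Y 1, Y 2, Y 3) ⟨hY, hYn⟩
  exact this.trans (nint_le_abs_linForm Y)

/-- A sequence of consecutive minimal points of the form. -/
structure IsMinimalSeq (θ : Fin 3 → ℝ) (X : ℕ → Fin 4 → ℤ) : Prop where
  height_pos : ∀ i, 0 < height (X i)
  height_lt : ∀ i, height (X i) < height (X (i + 1))
  form_lt : ∀ i, |linForm θ (X (i + 1))| < |linForm θ (X i)|
  form_lt_one : ∀ i, |linForm θ (X i)| < 1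
  le_form : ∀ i Y, 0 < height Y → height Y < height (X (i + 1)) →
    |linForm θ (X i)| ≤ |linForm θ Y|

lemma exists_isMinimalSeq
    (h : ∀ ε : ℝ, 0 < ε → ∃ Y : Fin 4 → ℤ, 0 < height Y ∧ |linForm θ Y| < ε)
    (hne : ∀ Y : Fin 4 → ℤ, 0 < height Y → linForm θ Y ≠ 0) :
    ∃ X, IsMinimalSeq θ X := by
  let Best : (Fin 4 → ℤ) → Prop := fun X => 0 < height X ∧ |linForm θ X| ≤ 1 / 2 ∧
    ∀ Y : Fin 4 → ℤ, 0 < height Y → height Y ≤ height X → |linForm θ X| ≤ |linForm θ Y|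
  have next : ∀ X, Best X → ∃ X', Best X' ∧ |linForm θ X'| < |linForm θ X| ∧
      ∀ Y, 0 < height Y → height Y < height X' → |linForm θ X| ≤ |linForm θ Y| := by
    rintro X ⟨hX, -, -⟩
    obtain ⟨Y₀, ⟨hY₀, hY₀X⟩, hmin⟩ := exists_minimalFor_of_wellFoundedLT
      (fun Y : Fin 4 → ℤ => 0 < height Y ∧ |linForm θ Y| < |linForm θ X|)
      (fun Y => (height Y).toNat) (h _ (abs_pos.2 (hne X hX)))
    obtain ⟨X', h1, h2, h3, h4⟩ := exists_min_linForm θ (n := height Y₀) hY₀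
    have hlt : |linForm θ X'| < |linForm θ X| := (h4 Y₀ hY₀ le_rfl).trans_lt hY₀X
    refine ⟨X', ⟨h1, h3, fun Y hY hYX => h4 Y hY (hYX.trans h2)⟩, hlt, fun Y hY hYX => ?_⟩
    by_contra! hc
    have := hmin ⟨hY, hc⟩
    simp only at this
    omega
  obtain ⟨X₀, a1, a2, a3, a4⟩ := exists_min_linForm θ (n := 1) le_rfl
  have hX₀ : Best X₀ := ⟨a1, a3, fun Y hY hYX => a4 Y hY (hYX.trans a2)⟩
  choose f hf1 hf2 hf3 using next
  let S : ℕ → {X // Best X} := fun n => Nat.rec ⟨X₀, hX₀⟩ (fun _ p => ⟨f p.1 p.2, hf1 p.1 p.2⟩) n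
  refine ⟨fun n => (S n).1, fun i => (S i).2.1, fun i => ?_, fun i => hf2 _ (S i).2,
    fun i => (S i).2.2.1.trans_lt (by norm_num), fun i => hf3 _ (S i).2⟩
  by_contra! hc
  exact (hf2 _ (S i).2).not_ge ((S i).2.2.2 _ (S (i + 1)).2.1 hc)

lemma abs_det_le_of_abs_le_mul {n : ℕ} (A : Matrix (Fin n) (Fin n) ℝ) (r c : Fin n → ℝ)
    (h : ∀ i j, |A i j| ≤ r i * c j) :
    |A.det| ≤ n.factorial * ((∏ i, r i) * ∏ j, c j) := by
  rw [Matrix.det_apply]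
  refine (Finset.abs_sum_le_sum_abs _ _).trans ?_
  have : ∀ σ ∈ (Finset.univ : Finset (Equiv.Perm (Fin n))),
      |Equiv.Perm.sign σ • ∏ i, A (σ i) i| ≤ (∏ i, r i) * ∏ j, c j := by
    intro σ _
    have h1 : |Equiv.Perm.sign σ • ∏ i, A (σ i) i| = ∏ i, |A (σ i) i| := by
      rw [← Finset.abs_prod]
      rcases Int.units_eq_one_or (Equiv.Perm.sign σ) with hs | hs <;> simp [hs]
    rw [h1, ← Equiv.prod_comp σ r, ← Finset.prod_mul_distrib]
    exact Finset.prod_le_prod (fun _ _ => abs_nonneg _) (fun i _ => h _ _)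
  refine (Finset.sum_le_card_nsmul _ _ _ this).trans (le_of_eq ?_)
  simp [Finset.card_univ, Fintype.card_perm]

lemma det_cons_smul_add {n : ℕ} (c : ℝ) (v w : Fin (n + 1) → ℝ)
    (t : Fin n → Fin (n + 1) → ℝ) :
    (Matrix.of (Fin.cons (c • v + w) t : Fin (n + 1) → Fin (n + 1) → ℝ)).det
      = c * (Matrix.of (Fin.cons v t : Fin (n + 1) → Fin (n + 1) → ℝ)).det
        + (Matrix.of (Fin.cons w t : Fin (n + 1) → Fin (n + 1) → ℝ)).det := by
  have h : ∀ u : Fin (n + 1) → ℝ,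
      (Matrix.of (Fin.cons u t : Fin (n + 1) → Fin (n + 1) → ℝ)).det
        = ∑ j : Fin (n + 1), (-1) ^ (j : ℕ) * u j * ((Matrix.of t).submatrix id j.succAbove).det :=
    fun u => Matrix.det_succ_row_zero _
  rw [h, h, h, Finset.mul_sum, ← Finset.sum_add_distrib]
  refine Finset.sum_congr rfl fun j _ => ?_
  simp only [Pi.add_apply, Pi.smul_apply, smul_eq_mul]
  ring

lemma det_formVec (θ : Fin 3 → ℝ) (Y : Fin 4 → Fin 4 → ℤ) :
    (Matrix.of fun i => formVec θ (Y i)).det = ((Matrix.of Y).det : ℝ) := by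
  let U : Matrix (Fin 4) (Fin 4) ℝ :=
    !![1, 0, 0, 0; θ 0, 1, 0, 0; θ 1, 0, 1, 0; θ 2, 0, 0, 1]
  have hU : U.det = 1 := by
    simp [U, Matrix.det_succ_row_zero, Fin.sum_univ_succ]
  have h : (Matrix.of fun i => formVec θ (Y i)) = (Matrix.of Y).map (Int.castRingHom ℝ) * U := by
    ext i j
    fin_cases j <;> simp [U, Matrix.mul_apply, Fin.sum_univ_four, formVec, linForm]
    ring
  rw [h, Matrix.det_mul, hU, mul_one]
  exact ((Int.castRingHom ℝ).map_det _).symm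

lemma one_le_abs_det_formVec {Y : Fin 4 → Fin 4 → ℤ}
    (h : LinearIndependent ℝ fun i => formVec θ (Y i)) :
    1 ≤ |(Matrix.of fun i => formVec θ (Y i)).det| := by
  have h0 : (Matrix.of fun i => formVec θ (Y i)).det ≠ 0 :=
    ((Matrix.isUnit_iff_isUnit_det _).1
      (Matrix.linearIndependent_rows_iff_isUnit.1 h)).ne_zero
  rw [det_formVec] at h0 ⊢
  have h1 : (Matrix.of Y).det ≠ 0 := by exact_mod_cast h0
  exact_mod_cast Int.one_le_abs h1

/-- The `2 × 2` minor of consecutive vectors on the form column and a further column. -/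
noncomputable def minor (θ : Fin 3 → ℝ) (X : ℕ → Fin 4 → ℤ) (i : ℕ) (j : Fin 3) : ℝ :=
  linForm θ (X i) * formVec θ (X (i + 1)) j.succ - linForm θ (X (i + 1)) * formVec θ (X i) j.succ

/-- The plane spanned by two consecutive vectors is left at the next step. -/
def Leaves (θ : Fin 3 → ℝ) (X : ℕ → Fin 4 → ℤ) (i : ℕ) : Prop :=
  formVec θ (X (i + 2)) ∉ Submodule.span ℝ {formVec θ (X i), formVec θ (X (i + 1))}

/-- Three consecutive vectors of the sequence, the last one first. -/
noncomputable def triple (θ : Fin 3 → ℝ) (X : ℕ → Fin 4 → ℤ) (i : ℕ) : Fin 3 → Fin 4 → ℝ :=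
  ![formVec θ (X (i + 2)), formVec θ (X i), formVec θ (X (i + 1))]

namespace IsMinimalSeq

variable {X : ℕ → Fin 4 → ℤ}

lemma form_pos (hX : IsMinimalSeq θ X)
    (i : ℕ) : 0 < |linForm θ (X i)| := (abs_nonneg _).trans_lt (hX.form_lt i)

lemma height_cast_pos (hX : IsMinimalSeq θ X)
    (i : ℕ) : (0 : ℝ) < height (X i) := by exact_mod_cast hX.height_pos i

lemma height_cast_lt (hX : IsMinimalSeq θ X) (i : ℕ) : (height (X i) : ℝ) < height (X (i + 1)) := by
  exact_mod_cast hX.height_lt i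

lemma eq_zero_of_small (hX : IsMinimalSeq θ X)
    {i : ℕ} {Y : Fin 4 → ℤ} (h1 : (height Y : ℝ) < height (X (i + 1)))
    (h2 : |linForm θ Y| < |linForm θ (X i)|) : Y = 0 := by
  refine eq_zero_of_height_eq_zero ?_ (h2.trans (hX.form_lt_one i))
  by_contra hne
  exact h2.not_ge
    (hX.le_form i Y (lt_of_le_of_ne (height_nonneg Y) (Ne.symm hne)) (by exact_mod_cast h1))

/-- Consecutive minimal points form a basis of the lattice points in their plane. -/
lemma exists_int_comb (hX : IsMinimalSeq θ X) {i : ℕ} {Y : Fin 4 → ℤ}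
    (hY : formVec θ Y ∈ Submodule.span ℝ {formVec θ (X i), formVec θ (X (i + 1))}) :
    ∃ a b : ℤ, Y = a • X i + b • X (i + 1) := by
  obtain ⟨a, b, hab⟩ := Submodule.mem_span_pair.1 hY
  refine ⟨round a, round b, ?_⟩
  set Z : Fin 4 → ℤ := (1 : ℤ) • Y + (-round a) • X i + (-round b) • X (i + 1) with hZ
  have hZV : ∀ k, formVec θ Z k
      = (a - round a) * formVec θ (X i) k + (b - round b) * formVec θ (X (i + 1)) k := by
    intro k
    rw [hZ, formVec_comb, ← hab]
    simp; ring
  have ha := abs_sub_round a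
  have hb := abs_sub_round b
  have bound : ∀ k, |formVec θ Z k| ≤
      1 / 2 * |formVec θ (X i) k| + 1 / 2 * |formVec θ (X (i + 1)) k| := by
    intro k
    rw [hZV]
    refine (abs_add_le _ _).trans ?_
    rw [abs_mul, abs_mul]
    gcongr
  have h0 : Z = 0 := by
    refine hX.eq_zero_of_small (i := i) ?_ ?_
    · refine lt_of_le_of_lt (height_le_of_formVec (θ := θ) fun j => (bound j.succ).trans
        (add_le_add (mul_le_mul_of_nonneg_left (abs_formVec_succ_le (X i) j) (by norm_num))
        (mul_le_mul_of_nonneg_left (abs_formVec_succ_le (X (i + 1)) j) (by norm_num)))) ?_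
      linarith [hX.height_cast_lt i]
    · have := bound 0
      simp only [formVec, Matrix.cons_val_zero] at this
      linarith [hX.form_lt i]
  rw [hZ] at h0
  simp only [one_smul, neg_smul] at h0
  linear_combination h0

lemma exists_le_abs_minor (hX : IsMinimalSeq θ X) (i : ℕ) :
    ∃ j, |linForm θ (X i)| * height (X (i + 1)) ≤ 4 * |minor θ X i j| := by
  by_contra! hc
  set l := linForm θ (X i) with hl
  set l' := linForm θ (X (i + 1)) with hl'
  have hlpos : 0 < |l| := hX.form_pos i
  have hll : |l'| < |l| := hX.form_lt i
  have hMM := hX.height_cast_lt i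
  have hM := hX.height_cast_pos i
  set M : ℝ := (height (X i) : ℝ) with hMdef
  set M' : ℝ := (height (X (i + 1)) : ℝ) with hM'def
  have hl0 : l ≠ 0 := abs_pos.1 hlpos
  set t := l' / l with ht
  have htl : l' = t * l := by rw [ht]; field_simp
  have ht1 : |t| < 1 := by
    rw [ht, abs_div, div_lt_one hlpos]; exact hll
  have hdiff : ∀ j : Fin 3,
      |formVec θ (X (i + 1)) j.succ - t * formVec θ (X i) j.succ| ≤ M' / 4 := by
    intro j
    have h1 := hc j
    have h2 : minor θ X i j
        = l * (formVec θ (X (i + 1)) j.succ - t * formVec θ (X i) j.succ) := by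
      rw [minor, ← hl, ← hl', htl]; ring
    rw [h2, abs_mul] at h1
    nlinarith
  have htlow : 3 / 4 * M' ≤ |t| * M := by
    obtain ⟨j, hj⟩ := exists_abs_formVec_eq (θ := θ) (X (i + 1))
    have h1 := hdiff j
    have h2 := abs_formVec_succ_le (θ := θ) (X i) j
    have h3 := abs_sub_abs_le_abs_sub (formVec θ (X (i + 1)) j.succ) (t * formVec θ (X i) j.succ)
    rw [abs_mul, hj] at h3
    nlinarith [abs_nonneg t]
  obtain ⟨s, hs, hst⟩ : ∃ s : ℤ, |(s : ℝ)| = 1 ∧ |t - s| = 1 - |t| := by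
    rcases le_total 0 t with h | h
    · refine ⟨1, by simp, ?_⟩
      rw [abs_of_nonneg h] at ht1 ⊢
      push_cast
      rw [abs_of_neg (by linarith)]; ring
    · refine ⟨-1, by simp, ?_⟩
      rw [abs_of_nonpos h] at ht1 ⊢
      push_cast
      rw [abs_of_pos (by linarith)]; ring
  set Z : Fin 4 → ℤ := (1 : ℤ) • X (i + 1) + (-s) • X i + (0 : ℤ) • X i with hZ
  have hZV : ∀ k, formVec θ Z k = formVec θ (X (i + 1)) k - s * formVec θ (X i) k := by
    intro k
    rw [hZ, formVec_comb]
    simp; ring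
  have h0 : Z = 0 := by
    refine hX.eq_zero_of_small (i := i) ?_ ?_
    · refine lt_of_le_of_lt (b := M' / 4 + (1 - |t|) * M)
        (height_le_of_formVec (θ := θ) fun j => ?_) ?_
      · rw [hZV, show formVec θ (X (i + 1)) j.succ - s * formVec θ (X i) j.succ
          = (formVec θ (X (i + 1)) j.succ - t * formVec θ (X i) j.succ)
            + (t - s) * formVec θ (X i) j.succ by ring]
        refine (abs_add_le _ _).trans (add_le_add (hdiff j) ?_)
        rw [abs_mul, hst]
        exact mul_le_mul_of_nonneg_left (abs_formVec_succ_le _ _) (by linarith)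
      · nlinarith
    · have h1 := hZV 0
      simp only [formVec, Matrix.cons_val_zero] at h1
      rw [h1, ← hl, ← hl', htl, ← sub_mul, abs_mul, hst]
      have : 0 < |t| := by
        by_contra! h
        nlinarith
      nlinarith
  have h1 : linForm θ Z = l' - s * l := by
    have h1 := hZV 0
    simpa only [formVec, Matrix.cons_val_zero] using h1
  have h2 : l' = s * l := by
    rw [h0] at h1
    have : linForm θ 0 = 0 := by simp [linForm]
    linarith
  rw [h2, abs_mul, hs, one_mul] at hll
  exact lt_irrefl _ hll

lemma abs_minor_le (hX : IsMinimalSeq θ X) (i : ℕ) (j : Fin 3) :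
    |minor θ X i j| ≤ 2 * (|linForm θ (X i)| * height (X (i + 1))) := by
  refine (abs_sub _ _).trans ?_
  rw [abs_mul, abs_mul]
  have h1 := abs_formVec_succ_le (θ := θ) (X (i + 1)) j
  have h2 := (abs_formVec_succ_le (θ := θ) (X i) j).trans (hX.height_cast_lt i).le
  have h3 := mul_le_mul_of_nonneg_left h1 (abs_nonneg (linForm θ (X i)))
  have h4 := mul_le_mul (hX.form_lt i).le h2 (abs_nonneg _) (abs_nonneg _)
  linarith

lemma abs_minor_le_succ (hX : IsMinimalSeq θ X) {i : ℕ} (hi : ¬ Leaves θ X i) (j : Fin 3) :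
    |minor θ X i j| ≤ |minor θ X (i + 1) j| := by
  obtain ⟨a, b, hab⟩ := hX.exists_int_comb (not_not.1 hi)
  have hab' : X (i + 2) = a • X i + b • X (i + 1) + (0 : ℤ) • X i := by rw [hab]; simp
  have hL : linForm θ (X (i + 2)) = a * linForm θ (X i) + b * linForm θ (X (i + 1)) := by
    rw [hab', linForm_comb]; simp
  have ha : a ≠ 0 := by
    rintro rfl
    have hlt := hX.form_lt (i + 1)
    rw [show i + 1 + 1 = i + 2 from rfl, hL] at hlt
    simp only [Int.cast_zero, zero_mul, zero_add, abs_mul] at hlt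
    have hb : b = 0 := by
      by_contra hb
      have : (1 : ℝ) ≤ |(b : ℝ)| := by exact_mod_cast Int.one_le_abs hb
      nlinarith [abs_nonneg (linForm θ (X (i + 1)))]
    have := hX.form_pos (i + 2)
    rw [hL, hb] at this
    simp at this
  have hV : formVec θ (X (i + 2)) j.succ
      = a * formVec θ (X i) j.succ + b * formVec θ (X (i + 1)) j.succ := by
    rw [hab', formVec_comb]; simp
  have h : minor θ X (i + 1) j = -(a * minor θ X i j) := by
    simp only [minor, show i + 1 + 1 = i + 2 from rfl]
    rw [hL, hV]; ring
  rw [h, abs_neg, abs_mul]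
  have : (1 : ℝ) ≤ |(a : ℝ)| := by exact_mod_cast Int.one_le_abs ha
  exact le_mul_of_one_le_left (abs_nonneg _) this

lemma abs_minor_mono (hX : IsMinimalSeq θ X)
    {p q : ℕ} (hpq : p ≤ q) (h : ∀ i, p ≤ i → i < q → ¬ Leaves θ X i)
    (j : Fin 3) : |minor θ X p j| ≤ |minor θ X q j| := by
  induction q, hpq using Nat.le_induction with
  | base => exact le_rfl
  | succ q hq ih =>
    exact (ih fun i h1 h2 => h i h1 (h2.trans q.lt_succ_self)).trans
      (hX.abs_minor_le_succ (h q hq q.lt_succ_self) j)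

lemma form_mul_height_le (hX : IsMinimalSeq θ X)
    {p q : ℕ} (hpq : p ≤ q) (h : ∀ i, p ≤ i → i < q → ¬ Leaves θ X i) :
    |linForm θ (X p)| * height (X (p + 1)) ≤ 8 * (|linForm θ (X q)| * height (X (q + 1))) := by
  obtain ⟨j, hj⟩ := hX.exists_le_abs_minor p
  linarith [hX.abs_minor_mono hpq h j, hX.abs_minor_le q j]

lemma linearIndependent_triple (hX : IsMinimalSeq θ X) {i : ℕ} (hi : Leaves θ X i) :
    LinearIndependent ℝ (triple θ X i) := by
  have hpair : LinearIndependent ℝ ![formVec θ (X i), formVec θ (X (i + 1))] := by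
    rw [LinearIndependent.pair_iff]
    intro s t hst
    obtain ⟨j, hj⟩ := hX.exists_le_abs_minor i
    have hpos := mul_pos (hX.form_pos i) (hX.height_cast_pos (i + 1))
    have hm : minor θ X i j ≠ 0 := by
      intro h; rw [h] at hj; simp at hj; linarith
    have e0 : s * linForm θ (X i) + t * linForm θ (X (i + 1)) = 0 := by
      simpa [formVec] using congrFun hst 0
    have e1 : s * formVec θ (X i) j.succ + t * formVec θ (X (i + 1)) j.succ = 0 := by
      simpa using congrFun hst j.succ
    have hs : s * minor θ X i j = 0 := by
      rw [minor]
      linear_combination formVec θ (X (i + 1)) j.succ * e0 - linForm θ (X (i + 1)) * e1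
    have hs0 : s = 0 := (mul_eq_zero.1 hs).resolve_right hm
    refine ⟨hs0, ?_⟩
    rw [hs0, zero_mul, zero_add] at e0
    exact (mul_eq_zero.1 e0).resolve_right (abs_pos.1 (hX.form_pos (i + 1)))
  refine linearIndependent_finCons.2 ⟨hpair, ?_⟩
  rwa [Matrix.range_cons, Matrix.range_cons, Matrix.range_empty, Set.union_empty,
    Set.singleton_union]

lemma abs_det_cons_triple_le (hX : IsMinimalSeq θ X) (i : ℕ) {Z : Fin 4 → ℝ} {R : ℝ}
    (h0 : |Z 0| * height (X i) ≤ R * |linForm θ (X i)|) (h1 : ∀ j : Fin 3, |Z j.succ| ≤ R) :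
    |(Matrix.of (Fin.cons Z (triple θ X i) : Fin 4 → Fin 4 → ℝ)).det|
      ≤ 24 * (|linForm θ (X i)| * height (X (i + 1)) * height (X (i + 2)) * R) := by
  have hM := hX.height_cast_pos i
  have hM1 := hX.height_cast_lt i
  have hM2 := hX.height_cast_lt (i + 1)
  have hl1 := hX.form_lt i
  have hl2 := hX.form_lt (i + 1)
  have hl := hX.form_pos i
  have row : ∀ (Y : Fin 4 → ℝ) (r : ℝ), |Y 0| * height (X i) ≤ r * |linForm θ (X i)| →
      (∀ j : Fin 3, |Y j.succ| ≤ r) → ∀ j : Fin 4,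
      |Y j| ≤ r * (Fin.cons (|linForm θ (X i)| / height (X i)) (fun _ => 1) : Fin 4 → ℝ) j := by
    intro Y r h0 h1 j
    refine Fin.cases ?_ (fun j => ?_) j
    · rw [Fin.cons_zero, ← mul_div_assoc, le_div_iff₀ hM]; exact h0
    · rw [Fin.cons_succ, mul_one]; exact h1 j
  have row' : ∀ Y : Fin 4 → ℤ, |linForm θ Y| ≤ |linForm θ (X i)| →
      (height (X i) : ℝ) ≤ height Y → ∀ j : Fin 4, |formVec θ Y j| ≤ height Y *
        (Fin.cons (|linForm θ (X i)| / height (X i)) (fun _ => 1) : Fin 4 → ℝ) j := by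
    intro Y h0 h1
    refine row _ _ ?_ (abs_formVec_succ_le Y)
    show |linForm θ Y| * _ ≤ _
    rw [mul_comm]
    exact mul_le_mul h1 h0 (abs_nonneg _) (hM.le.trans h1)
  have key := abs_det_le_of_abs_le_mul
    (Matrix.of (Fin.cons Z (triple θ X i) : Fin 4 → Fin 4 → ℝ))
    ![R, height (X (i + 2)), height (X i), height (X (i + 1))]
    (Fin.cons (|linForm θ (X i)| / height (X i)) (fun _ => 1)) (by
      intro a
      fin_cases a
      · exact row Z R h0 h1
      · exact row' (X (i + 2)) (by linarith) (by linarith)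
      · exact row' (X i) le_rfl le_rfl
      · exact row' (X (i + 1)) hl1.le hM1.le)
  refine key.trans (le_of_eq ?_)
  simp [Fin.prod_univ_succ, Nat.factorial]
  field_simp

/-- The case of four independent vectors. -/
lemma one_le_of_notMem_span (hX : IsMinimalSeq θ X) {p q : ℕ} (hp : Leaves θ X p) (hpq : p ≤ q)
    (h : formVec θ (X (q + 2)) ∉ Submodule.span ℝ (Set.range (triple θ X p))) :
    1 ≤ 24 * (|linForm θ (X p)| * height (X (p + 1)) * height (X (p + 2))
      * height (X (q + 2))) := by
  have hli := linearIndependent_finCons.2 ⟨hX.linearIndependent_triple hp, h⟩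
  have he : (Fin.cons (formVec θ (X (q + 2))) (triple θ X p) : Fin 4 → Fin 4 → ℝ)
      = fun i => formVec θ ((![X (q + 2), X (p + 2), X p, X (p + 1)] : Fin 4 → Fin 4 → ℤ) i) := by
    funext i
    fin_cases i <;> rfl
  rw [he] at hli
  refine (one_le_abs_det_formVec hli).trans ?_
  rw [← he]
  refine hX.abs_det_cons_triple_le p ?_ (abs_formVec_succ_le _)
  have hanti : |linForm θ (X (q + 2))| ≤ |linForm θ (X p)| :=
    antitone_nat_of_succ_le (f := fun n => |linForm θ (X n)|) (fun n => (hX.form_lt n).le)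
      (by omega)
  have hmono : (height (X p) : ℝ) ≤ height (X (q + 2)) :=
    monotone_nat_of_le_succ (f := fun n => (height (X n) : ℝ))
      (fun n => (hX.height_cast_lt n).le) (by omega)
  show |linForm θ (X (q + 2))| * _ ≤ _
  rw [mul_comm]
  exact mul_le_mul hmono hanti (abs_nonneg _) (hX.height_cast_pos _).le

lemma exists_pos_le_of_triple_mem (hX : IsMinimalSeq θ X) {p₀ : ℕ} (hp₀ : Leaves θ X p₀) :
    ∃ c > 0, ∀ q, Leaves θ X q →
      (∀ k, triple θ X q k ∈ Submodule.span ℝ (Set.range (triple θ X p₀))) →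
      c ≤ |linForm θ (X q)| * height (X (q + 1)) * height (X (q + 2)) := by
  set S := Submodule.span ℝ (Set.range (triple θ X p₀)) with hS
  have hli := hX.linearIndependent_triple hp₀
  have hrank : Module.finrank ℝ S = 3 := by
    rw [hS, finrank_span_eq_card hli, Fintype.card_fin]
  have htop : ¬ ∀ k : Fin 4, (Pi.single k 1 : Fin 4 → ℝ) ∈ S := by
    intro h
    have : S = ⊤ := by
      rw [eq_top_iff]
      intro v _
      rw [← Finset.univ_sum_single v]
      refine S.sum_mem fun k _ => ?_
      have := S.smul_mem (v k) (h k)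
      rwa [← Pi.single_smul, smul_eq_mul, mul_one] at this
    rw [this, finrank_top] at hrank
    simp at hrank
  obtain ⟨Y₀, hY₀⟩ : ∃ Y : Fin 4 → ℤ, formVec θ Y ∉ S := by
    by_contra! hall
    apply htop
    have h0 : (Pi.single 0 1 : Fin 4 → ℝ) ∈ S := by
      convert hall (Pi.single 0 1) using 1
      ext k; fin_cases k <;> simp [formVec, linForm]
    intro k
    refine Fin.cases h0 (fun j => ?_) k
    convert S.sub_mem (hall (Pi.single j.succ 1)) (S.smul_mem (θ j) h0) using 1
    ext k; fin_cases j <;> fin_cases k <;> simp [formVec, linForm]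
  obtain ⟨j, hj⟩ : ∃ j : Fin 3, (Pi.single j.succ 1 : Fin 4 → ℝ) ∉ S := by
    by_contra! hall
    apply htop
    refine Fin.cases ?_ hall
    have hmem : formVec θ (X p₀) ∈ S := Submodule.subset_span ⟨1, rfl⟩
    have hsum : (∑ j : Fin 3, formVec θ (X p₀) j.succ • (Pi.single j.succ 1 : Fin 4 → ℝ)) ∈ S :=
      S.sum_mem fun j _ => S.smul_mem _ (hall j)
    have hl0 : linForm θ (X p₀) ≠ 0 := abs_pos.1 (hX.form_pos p₀)
    have hv : formVec θ (X p₀) = linForm θ (X p₀) • (Pi.single 0 1 : Fin 4 → ℝ)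
        + ∑ j : Fin 3, formVec θ (X p₀) j.succ • (Pi.single j.succ 1 : Fin 4 → ℝ) := by
      conv_lhs => rw [← Finset.univ_sum_single (formVec θ (X p₀)), Fin.sum_univ_succ]
      simp only [← Pi.single_smul, smul_eq_mul, mul_one]
      rfl
    rw [hv] at hmem
    exact (S.smul_mem_iff hl0).1 ((S.add_mem_iff_left hsum).1 hmem)
  have hspan : Submodule.span ℝ (insert (formVec θ Y₀) (Set.range (triple θ X p₀))) = ⊤ := by
    rw [← Fin.range_cons]
    refine (linearIndependent_finCons.2 ⟨hli, hY₀⟩).span_eq_top_of_card_eq_finrank ?_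
    simp
  have hZ : (Pi.single j.succ 1 : Fin 4 → ℝ) ∈ Submodule.span ℝ
      (insert (formVec θ Y₀) (Set.range (triple θ X p₀))) := hspan ▸ Submodule.mem_top
  obtain ⟨c, s, hs, hcs⟩ := Submodule.mem_span_insert.1 hZ
  have hc : c ≠ 0 := by
    rintro rfl
    rw [hcs, zero_smul, zero_add] at hj
    exact hj hs
  refine ⟨|c| / 24, by positivity, fun q hq hqS => ?_⟩
  have hliq := hX.linearIndependent_triple hq
  have hSq : Submodule.span ℝ (Set.range (triple θ X q)) = S := by
    refine Submodule.eq_of_le_of_finrank_eq (Submodule.span_le.2 ?_) ?_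
    · rintro _ ⟨k, rfl⟩; exact hqS k
    · rw [finrank_span_eq_card hliq, hrank, Fintype.card_fin]
  let φ : (Fin 4 → ℝ) → ℝ := fun v =>
    (Matrix.of (Fin.cons v (triple θ X q) : Fin 4 → Fin 4 → ℝ)).det
  have hφs : φ s = 0 := by
    by_contra hne
    have : LinearIndependent ℝ (Fin.cons s (triple θ X q) : Fin 4 → Fin 4 → ℝ) :=
      Matrix.linearIndependent_rows_iff_isUnit.2
        ((Matrix.isUnit_iff_isUnit_det _).2 (isUnit_iff_ne_zero.2 hne))
    exact (linearIndependent_finCons.1 this).2 (hSq ▸ hs)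
  have hφY : 1 ≤ |φ (formVec θ Y₀)| := by
    have he : (Fin.cons (formVec θ Y₀) (triple θ X q) : Fin 4 → Fin 4 → ℝ)
        = fun i => formVec θ ((![Y₀, X (q + 2), X q, X (q + 1)] : Fin 4 → Fin 4 → ℤ) i) := by
      funext i
      fin_cases i <;> rfl
    have hli4 := linearIndependent_finCons.2 ⟨hliq, hSq.symm ▸ hY₀⟩
    simp only [φ]
    rw [he] at hli4 ⊢
    exact one_le_abs_det_formVec hli4
  have hφZ : φ (Pi.single j.succ 1) = c * φ (formVec θ Y₀) + φ s := by
    rw [hcs]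
    exact det_cons_smul_add _ _ _ _
  have hub := hX.abs_det_cons_triple_le q (Z := Pi.single j.succ 1) (R := 1) (by
      rw [Pi.single_eq_of_ne (Fin.succ_ne_zero j).symm]; simp) (by
      intro k
      rw [Pi.single_apply]; split_ifs <;> simp)
  have : |φ (Pi.single j.succ 1)| = |c| * |φ (formVec θ Y₀)| := by
    rw [hφZ, hφs, add_zero, abs_mul]
  have h3 : |c| ≤ |φ (Pi.single j.succ 1)| := by
    rw [this]; exact le_mul_of_one_le_right (abs_nonneg _) hφY
  have h4 := h3.trans hub
  linarith

lemma triple_mem_span_of_forall {n p₀ : ℕ} (hn : n ≤ p₀) (hp₀ : Leaves θ X p₀)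
    (h : ∀ p q, n ≤ p → p < q → Leaves θ X p → Leaves θ X q →
      (∀ i, p < i → i < q → ¬ Leaves θ X i) →
      formVec θ (X (q + 2)) ∈ Submodule.span ℝ (Set.range (triple θ X p)))
    {q : ℕ} (hq : p₀ ≤ q) (hql : Leaves θ X q) (k : Fin 3) :
    triple θ X q k ∈ Submodule.span ℝ (Set.range (triple θ X p₀)) := by
  set S := Submodule.span ℝ (Set.range (triple θ X p₀))
  have inv : ∀ i, p₀ ≤ i → ∃ p, p₀ ≤ p ∧ p ≤ i ∧ Leaves θ X p ∧
      (∀ j, p < j → j ≤ i → ¬ Leaves θ X j) ∧ (∀ k, triple θ X p k ∈ S) ∧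
      formVec θ (X (i + 1)) ∈ S ∧ formVec θ (X (i + 2)) ∈ S := by
    intro i hi
    induction i, hi using Nat.le_induction with
    | base =>
      exact ⟨p₀, le_rfl, le_rfl, hp₀, fun j h1 h2 => absurd h1 h2.not_gt,
        fun k => Submodule.subset_span ⟨k, rfl⟩, Submodule.subset_span ⟨2, rfl⟩,
        Submodule.subset_span ⟨0, rfl⟩⟩
    | succ i hi ih =>
      obtain ⟨p, hp0, hpi, hpl, hgap, hmem, h1, h2⟩ := ih
      by_cases hl : Leaves θ X (i + 1)
      · have h3 : formVec θ (X (i + 3)) ∈ S := by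
          refine Submodule.span_le.2 ?_ (h p (i + 1) (hn.trans hp0) (by omega) hpl hl
            fun j hj1 hj2 => hgap j hj1 (by omega))
          rintro _ ⟨k, rfl⟩
          exact hmem k
        refine ⟨i + 1, by omega, le_rfl, hl, fun j hj1 hj2 => absurd hj1 hj2.not_gt, ?_, h2, h3⟩
        intro k
        fin_cases k
        · exact h3
        · exact h1
        · exact h2
      · refine ⟨p, hp0, by omega, hpl, fun j hj1 hj2 => ?_, hmem, h2, ?_⟩
        · rcases Nat.lt_or_ge i j with hj | hj
          · rwa [show j = i + 1 by omega]
          · exact hgap j hj1 hj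
        · refine Submodule.span_le.2 ?_ (not_not.1 hl)
          rintro _ (rfl | rfl)
          · exact h1
          · exact h2
  obtain ⟨p, -, hpq, -, hgap, hmem, -⟩ := inv q hq
  rcases hpq.eq_or_lt with rfl | hlt
  · exact hmem k
  · exact absurd hql (hgap q hlt le_rfl)

lemma tendsto_height (hX : IsMinimalSeq θ X)
    : Tendsto (fun i => (height (X i) : ℝ)) atTop atTop := by
  refine tendsto_atTop_mono (fun i => ?_) tendsto_natCast_atTop_atTop
  induction i with
  | zero => simpa using (hX.height_cast_pos 0).le
  | succ i ih =>
    have h : (i : ℤ) ≤ height (X i) := by exact_mod_cast ih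
    have h2 : ((i + 1 : ℕ) : ℤ) ≤ height (X (i + 1)) := by
      have := hX.height_lt i
      push_cast; omega
    exact_mod_cast h2

lemma tendsto_log_height (hX : IsMinimalSeq θ X)
    : Tendsto (fun i => Real.log (height (X i))) atTop atTop :=
  Real.tendsto_log_atTop.comp hX.tendsto_height

lemma frequently_leaves (hX : IsMinimalSeq θ X) {α : ℝ} (hα : 1 < α)
    (H : ∀ᶠ i in atTop, α * Real.log (height (X (i + 1))) ≤ -Real.log |linForm θ (X i)|) :
    ∃ᶠ i in atTop, Leaves θ X i := by
  intro hev
  obtain ⟨N, hN⟩ := eventually_atTop.1 hev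
  set c := |linForm θ (X N)| * height (X (N + 1)) with hc
  have hcpos : 0 < c := mul_pos (hX.form_pos N) (hX.height_cast_pos _)
  have ht := hX.tendsto_log_height.comp (tendsto_add_atTop_nat 1)
  obtain ⟨q, hq1, hq2, hq3⟩ := (H.and ((eventually_ge_atTop N).and
    (ht.eventually_gt_atTop ((Real.log 8 - Real.log c) / (α - 1))))).exists
  have h1 := hX.form_mul_height_le hq2 fun i h1 _ => hN i h1
  have h2 := Real.log_le_log hcpos h1
  rw [Real.log_mul (by norm_num) (mul_pos (hX.form_pos q) (hX.height_cast_pos _)).ne',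
    Real.log_mul (hX.form_pos q).ne' (hX.height_cast_pos _).ne'] at h2
  rw [div_lt_iff₀ (by linarith)] at hq3
  simp only [Function.comp] at hq3
  nlinarith

end IsMinimalSeq

lemma mul_le_of_recursion {α β a b d e c : ℝ} (hα : 1 < α) (hβ : 0 ≤ β)
    (hβα : β ≤ α ^ 2 - α) (h1 : α * a ≤ a + b + e + c) (h2 : α * e ≤ β * d)
    (h3 : α * b ≤ β * a) (h4 : α * d ≤ β * a - b + d + c) :
    (α - 1) * (α ^ 3 - α ^ 2 - α * β - β ^ 2) * a ≤ α * (β + α ^ 2 - α) * c := by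
  have e1 := mul_le_mul_of_nonneg_left h1
    (mul_nonneg (sq_nonneg α) (sub_nonneg.2 hα.le))
  have e2 := mul_le_mul_of_nonneg_left h2
    (mul_nonneg (by linarith : (0 : ℝ) ≤ α) (sub_nonneg.2 hα.le))
  have e3 := mul_le_mul_of_nonneg_left h3 (sub_nonneg.2 hβα)
  have e4 := mul_le_mul_of_nonneg_left h4 (mul_nonneg (by linarith : (0 : ℝ) ≤ α) hβ)
  nlinarith

lemma lt_sq_sub_self {α β : ℝ} (hα : 1 < α)
    (h : β ^ 2 + β * α + α ^ 2 < α ^ 3) : β < α ^ 2 - α := by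
  by_contra! hc
  have h0 : 0 < α * (α - 1) := mul_pos (by linarith) (by linarith)
  have h1 : (α * (α - 1)) ^ 2 ≤ β ^ 2 := by nlinarith
  have h2 : α * (α - 1) * α ≤ β * α := by nlinarith
  have h3 : 0 < α ^ 2 * (α - 1) ^ 2 := by have := pow_pos h0 2; rwa [mul_pow] at this
  nlinarith

namespace IsMinimalSeq

variable {X : ℕ → Fin 4 → ℤ}

/-- The uniform exponent `α` and the ordinary exponent `β` satisfy `g² + g + 1 ≥ α` for
`g = β / α`. -/
lemma cube_le (hX : IsMinimalSeq θ X) {α β : ℝ} (hα : 1 < α) (hβ : 0 ≤ β)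
    (H₁ : ∀ᶠ i in atTop, α * Real.log (height (X (i + 1))) ≤ -Real.log |linForm θ (X i)|)
    (H₂ : ∀ᶠ i in atTop, -Real.log |linForm θ (X i)| ≤ β * Real.log (height (X i))) :
    α ^ 3 ≤ β ^ 2 + β * α + α ^ 2 := by
  by_contra! hlt
  have hβα := lt_sq_sub_self hα hlt
  have hfreq := hX.frequently_leaves hα H₁
  obtain ⟨N, hN⟩ := eventually_atTop.1 (H₁.and H₂)
  have ht := hX.tendsto_log_height.comp (tendsto_add_atTop_nat 1)
  by_cases hcase : ∃ n, ∀ p q, n ≤ p → p < q → Leaves θ X p → Leaves θ X q →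
      (∀ i, p < i → i < q → ¬ Leaves θ X i) →
      formVec θ (X (q + 2)) ∈ Submodule.span ℝ (Set.range (triple θ X p))
  · obtain ⟨n, hn⟩ := hcase
    obtain ⟨p₀, hnp, hp₀⟩ := frequently_atTop.1 hfreq n
    obtain ⟨c, hc, hbound⟩ := hX.exists_pos_le_of_triple_mem hp₀
    obtain ⟨q, hql, hqp, hqN, hqm⟩ := (hfreq.and_eventually ((eventually_ge_atTop p₀).and
      ((eventually_ge_atTop N).and
        (ht.eventually_gt_atTop (-α * Real.log c / (α ^ 2 - α - β)))))).exists
    have h1 := Real.log_le_log hc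
      (hbound q hql fun k => triple_mem_span_of_forall hnp hp₀ hn hqp hql k)
    rw [Real.log_mul (mul_pos (hX.form_pos q) (hX.height_cast_pos _)).ne'
      (hX.height_cast_pos _).ne',
      Real.log_mul (hX.form_pos q).ne' (hX.height_cast_pos _).ne'] at h1
    rw [div_lt_iff₀ (by linarith)] at hqm
    simp only [Function.comp] at hqm
    have h2 := (hN q hqN).1
    have h3 := (hN (q + 1) (by omega)).1.trans (hN (q + 1) (by omega)).2
    simp only [show q + 1 + 1 = q + 2 from rfl] at h3
    nlinarith
  · push Not at hcase
    have hD : 0 < (α - 1) * (α ^ 3 - α ^ 2 - α * β - β ^ 2) :=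
      mul_pos (by linarith) (by linarith)
    obtain ⟨n, hn⟩ := eventually_atTop.1 (ht.eventually_gt_atTop
      (α * (β + α ^ 2 - α) * Real.log 24 / ((α - 1) * (α ^ 3 - α ^ 2 - α * β - β ^ 2))))
    obtain ⟨p, q, hp, hpq, hpl, -, hgap, hnot⟩ := hcase (max n N)
    have hm := hn p (le_of_max_le_left hp)
    have hpN : N ≤ p := le_of_max_le_right hp
    rw [div_lt_iff₀ hD] at hm
    simp only [Function.comp] at hm
    have h1 := Real.log_le_log one_pos (hX.one_le_of_notMem_span hpl hpq.le hnot)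
    have hL := hX.form_pos
    have hM := hX.height_cast_pos
    rw [Real.log_one, Real.log_mul (by norm_num)
      (mul_pos (mul_pos (mul_pos (hL _) (hM _)) (hM _)) (hM _)).ne',
      Real.log_mul (mul_pos (mul_pos (hL _) (hM _)) (hM _)).ne' (hM _).ne',
      Real.log_mul (mul_pos (hL _) (hM _)).ne' (hM _).ne',
      Real.log_mul (hL _).ne' (hM _).ne'] at h1
    have h2 := Real.log_le_log (mul_pos (hL _) (hM _))
      (hX.form_mul_height_le (p := p + 1) (q := q) hpq fun i hi => hgap i hi)
    rw [Real.log_mul (by norm_num) (mul_pos (hL _) (hM _)).ne',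
      Real.log_mul (hL _).ne' (hM _).ne', Real.log_mul (hL _).ne' (hM _).ne'] at h2
    have h8 : Real.log 8 ≤ Real.log 24 := Real.log_le_log (by norm_num) (by norm_num)
    have u1 := (hN p hpN).1
    have u2 := (hN q (by omega)).1
    have u3 := hN (p + 1) (by omega)
    have u4 := hN (q + 1) (by omega)
    have key := mul_le_of_recursion (a := Real.log (height (X (p + 1))))
      (b := Real.log (height (X (p + 2)))) (d := Real.log (height (X (q + 1))))
      (e := Real.log (height (X (q + 2)))) (c := Real.log 24) hα hβ hβα.le
      (by linarith) (u4.1.trans u4.2) (u3.1.trans u3.2)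
      (by linarith [u3.2, show p + 1 + 1 = p + 2 from rfl])
    linarith

end IsMinimalSeq

lemma exists_abs_linForm_le (θ : Fin 3 → ℝ) {t : ℝ} (ht : 1 ≤ t) :
    ∃ Y : Fin 4 → ℤ, 0 < height Y ∧ height Y ≤ t ∧ |linForm θ Y| ≤ 1 / t := by
  have hn : 0 < ⌊t⌋₊ := Nat.floor_pos.2 ht
  obtain ⟨j, k, hk, hkn, hjk⟩ := Real.exists_int_int_abs_mul_sub_le (θ 0) hn
  have hh : height ![-j, k, 0, 0] = k := by simp [height, abs_of_pos hk, hk.le]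
  refine ⟨![-j, k, 0, 0], by rwa [hh], ?_, ?_⟩
  · rw [hh]
    have : (k : ℝ) ≤ (⌊t⌋₊ : ℝ) := by exact_mod_cast hkn
    exact this.trans (Nat.floor_le (by linarith))
  · have hL : linForm θ ![-j, k, 0, 0] = k * θ 0 - j := by simp [linForm]; ring
    rw [hL]
    exact hjk.trans (one_div_le_one_div_of_le (by linarith) (Nat.lt_floor_add_one t).le)

lemma eventually_rpow_one_mul_psiL3_le (θ : Fin 3 → ℝ) :
    ∀ᶠ t : ℝ in atTop, t ^ (1 : ℝ) * psiL3 θ t ≤ 1 := by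
  filter_upwards [eventually_ge_atTop 1] with t ht
  obtain ⟨Y, h1, h2, h3⟩ := exists_abs_linForm_le θ ht
  rw [Real.rpow_one, mul_comm, ← le_div_iff₀ (by linarith)]
  exact (psiL3_le_abs_linForm h1 h2).trans h3

lemma IsMinimalSeq.eventually_le_neg_log {X : ℕ → Fin 4 → ℤ} (hX : IsMinimalSeq θ X)
    {α γ C : ℝ} (hαγ : α < γ) (h : ∀ᶠ t : ℝ in atTop, t ^ γ * psiL3 θ t ≤ C) :
    ∀ᶠ i in atTop, α * Real.log (height (X (i + 1))) ≤ -Real.log |linForm θ (X i)| := by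
  have ht := hX.tendsto_height.comp (tendsto_add_atTop_nat 1)
  have ht2 := hX.tendsto_log_height.comp (tendsto_add_atTop_nat 1)
  filter_upwards [(ht.atTop_div_const two_pos).eventually h, ht.eventually_ge_atTop 2,
    ht2.eventually_ge_atTop ((γ * Real.log 2 + Real.log (max C 1)) / (γ - α))] with i h1 h2 h3
  simp only [Function.comp] at h1 h2 h3
  set M : ℝ := (height (X (i + 1)) : ℝ) with hM
  have hMpos : 0 < M / 2 := by linarith
  have hψ : |linForm θ (X i)| ≤ psiL3 θ (M / 2) := by
    refine le_psiL3 (by linarith) fun Y hY hYM => hX.le_form i Y hY ?_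
    have : (height Y : ℝ) < height (X (i + 1)) := by rw [← hM]; linarith
    exact_mod_cast this
  have hL := hX.form_pos i
  have hpow := Real.rpow_pos_of_pos hMpos γ
  have h4 := Real.log_le_log (mul_pos hpow hL)
    (((mul_le_mul_of_nonneg_left hψ hpow.le).trans h1).trans (le_max_left C 1))
  rw [Real.log_mul hpow.ne' hL.ne', Real.log_rpow hMpos,
    Real.log_div (by linarith) two_ne_zero] at h4
  rw [div_le_iff₀ (by linarith)] at h3
  linarith

lemma IsMinimalSeq.eventually_neg_log_le {X : ℕ → Fin 4 → ℤ} (hX : IsMinimalSeq θ X)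
    {β : ℝ} (h : ∀ᶠ t : ℝ in atTop, 1 < t ^ β * psiL3 θ t) :
    ∀ᶠ i in atTop, -Real.log |linForm θ (X i)| ≤ β * Real.log (height (X i)) := by
  filter_upwards [hX.tendsto_height.eventually h] with i hi
  have hM := hX.height_cast_pos i
  have hpow := Real.rpow_pos_of_pos hM β
  have h1 := hi.le.trans (mul_le_mul_of_nonneg_left
    (psiL3_le_abs_linForm (hX.height_pos i) le_rfl) hpow.le)
  have h2 := Real.log_le_log one_pos h1
  rw [Real.log_one, Real.log_mul hpow.ne' (hX.form_pos i).ne', Real.log_rpow hM] at h2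
  linarith

lemma mul_bound_le_self {w : ℝ} (h1 : 1 ≤ w) (h3 : w ≤ 3) :
    w * (Real.sqrt (w + 1 / w ^ 2 - 7 / 4) + 1 / w - 1 / 2) ≤ w := by
  have hw : 0 < w := by linarith
  have hinv : 1 / w ≤ 1 := by rw [div_le_one hw]; exact h1
  have hs : Real.sqrt (w + 1 / w ^ 2 - 7 / 4) ≤ 3 / 2 - 1 / w := by
    rw [Real.sqrt_le_left (by linarith)]
    have : (3 / 2 - 1 / w) ^ 2 - (w + 1 / w ^ 2 - 7 / 4) = (w - 1) * (3 - w) / w := by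
      field_simp; ring
    have h0 : 0 ≤ (w - 1) * (3 - w) / w :=
      div_nonneg (mul_nonneg (by linarith) (by linarith)) hw.le
    linarith
  nlinarith

lemma lt_mul_bound {w : ℝ} (h3 : 3 < w) :
    w < w * (Real.sqrt (w + 1 / w ^ 2 - 7 / 4) + 1 / w - 1 / 2) := by
  have hw : 0 < w := by linarith
  have hs : 3 / 2 - 1 / w < Real.sqrt (w + 1 / w ^ 2 - 7 / 4) := by
    apply Real.lt_sqrt_of_sq_lt
    have : (3 / 2 - 1 / w) ^ 2 - (w + 1 / w ^ 2 - 7 / 4) = -((w - 1) * (w - 3) / w) := by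
      field_simp; ring
    have h0 : 0 < (w - 1) * (w - 3) / w :=
      div_pos (mul_pos (by linarith) (by linarith)) hw
    linarith
  nlinarith

lemma lt_cube_of_lt_mul_bound {w β : ℝ} (h3 : 3 < w) (hβ : w < β)
    (h : β < w * (Real.sqrt (w + 1 / w ^ 2 - 7 / 4) + 1 / w - 1 / 2)) :
    β ^ 2 + β * w + w ^ 2 < w ^ 3 := by
  have hw : 0 < w := by linarith
  obtain ⟨g, rfl⟩ : ∃ g, β = w * g := ⟨β / w, by field_simp⟩
  have hg1 : 1 < g := by nlinarith
  have hinv : 1 / w ≤ 1 := by rw [div_le_one hw]; linarith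
  have hlt : g + 1 / 2 - 1 / w < Real.sqrt (w + 1 / w ^ 2 - 7 / 4) := by
    linarith [lt_of_mul_lt_mul_left h hw.le]
  rw [Real.lt_sqrt (by linarith)] at hlt
  have hmul : w * (g ^ 2 + g + 1 - w) < 2 * g + 1 - w := by
    have : w * ((g + 1 / 2 - 1 / w) ^ 2 - (w + 1 / w ^ 2 - 7 / 4))
        = w * (g ^ 2 + g + 1 - w) - (2 * g + 1 - w) := by
      field_simp; ring
    nlinarith
  have hQ : g ^ 2 + g + 1 < w := by
    by_contra! hc
    nlinarith
  nlinarith [pow_pos hw 2]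

end MinimalPoints

/-- Moshchevitin's improvement of Jarník's inequality for `m = 3`, `n = 1`:
`ω ≥ ω̂·(√(ω̂ + 1/ω̂² − 7/4) + 1/ω̂ − 1/2)`.
The conclusion `ω ≥ RHS`, where `ω = sup{γ ≥ 0 : liminf t^γ ψ(t) < ∞}` (possibly `+∞`),
is expressed as: every real `x < RHS` is exceeded by some element of that set. -/
theorem stmt18 (θ : Fin 3 → ℝ)
    (hindep : LinearIndependent ℚ ![(1 : ℝ), θ 0, θ 1, θ 2])
    (omegaHat : ℝ)
    (homegaHat : IsLUB {γ : ℝ | 0 ≤ γ ∧ ∃ C : ℝ,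
      ∀ᶠ t : ℝ in atTop, t ^ γ * psiL3 θ t ≤ C} omegaHat) :
    ∀ x : ℝ,
      x < omegaHat * (Real.sqrt (omegaHat + 1 / omegaHat ^ 2 - 7 / 4)
        + 1 / omegaHat - 1 / 2) →
      ∃ γ : ℝ, (0 ≤ γ ∧ ∃ C : ℝ, ∃ᶠ t : ℝ in atTop, t ^ γ * psiL3 θ t ≤ C) ∧ x < γ := by
  intro x hx
  have hmem : (1 : ℝ) ≤ omegaHat :=
    homegaHat.1 ⟨zero_le_one, 1, MinimalPoints.eventually_rpow_one_mul_psiL3_le θ⟩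
  rcases le_or_gt omegaHat 3 with h3 | h3
  · obtain ⟨γ, ⟨h0, C, hC⟩, hγ⟩ := (lt_isLUB_iff homegaHat).1
      (hx.trans_le (MinimalPoints.mul_bound_le_self hmem h3))
    exact ⟨γ, ⟨h0, C, hC.frequently⟩, hγ⟩
  obtain ⟨β, hβ, hβG⟩ := exists_between (max_lt hx (MinimalPoints.lt_mul_bound h3))
  obtain ⟨hxβ, hwβ⟩ := max_lt_iff.1 hβ
  have hβ0 : 0 ≤ β := by linarith
  refine ⟨β, ⟨hβ0, 1, ?_⟩, hxβ⟩
  by_contra hfreq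
  rw [not_frequently] at hfreq
  have hpoly := MinimalPoints.lt_cube_of_lt_mul_bound h3 hwβ hβG
  have hopen : ∀ᶠ a in nhds omegaHat, 1 < a ∧ β ^ 2 + β * a + a ^ 2 < a ^ 3 :=
    (lt_mem_nhds (by linarith)).and (ContinuousAt.eventually_lt
      (f := fun a : ℝ => β ^ 2 + β * a + a ^ 2) (g := fun a : ℝ => a ^ 3)
      (by fun_prop) (by fun_prop) hpoly)
  obtain ⟨α, ⟨hα1, hα⟩, hαw⟩ := ((hopen.filter_mono nhdsWithin_le_nhds).and
    (self_mem_nhdsWithin (s := Set.Iio omegaHat))).exists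
  obtain ⟨γ, ⟨-, C, hC⟩, hαγ⟩ := (lt_isLUB_iff homegaHat).1 (Set.mem_Iio.1 hαw)
  obtain ⟨X, hX⟩ := MinimalPoints.exists_isMinimalSeq (θ := θ) (fun ε hε => by
    obtain ⟨Y, h1, -, h2⟩ := MinimalPoints.exists_abs_linForm_le θ
      (le_max_left 1 (2 / ε))
    refine ⟨Y, h1, h2.trans_lt ?_⟩
    rw [div_lt_iff₀ (by positivity)]
    have : ε * (2 / ε) ≤ ε * max 1 (2 / ε) := by gcongr; exact le_max_right _ _
    rw [mul_div_cancel₀ _ hε.ne'] at this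
    linarith)
    fun _ hY => MinimalPoints.linForm_ne_zero hindep hY
  exact hα.not_ge (hX.cube_le hα1 hβ0 (hX.eventually_le_neg_log hαγ hC)
    (hX.eventually_neg_log_le (hfreq.mono fun _ ht => not_le.1 ht)))
end

section
/- Let θ_1^1, θ_1^2, θ_2^1, θ_2^2 be four real numbers linearly independent over ℚ together with 1, and suppose the 2×2 matrix Θ with rows (θ_1^1, θ_1^2) and (θ_2^1, θ_2^2) satisfies Θx ∉ ℤ² for every nonzero x ∈ ℤ². Define ψ(t) = min over integer vectors (x_1, x_2) with 0 < max(|x_1|, |x_2|) ≤ t of max( ‖θ_1^1 x_1 + θ_1^2 x_2‖, ‖θ_2^1 x_1 + θ_2^2 x_2‖ ), and set ω = sup{ γ ≥ 0 : liminf_{t→∞} t^γ ψ(t) < ∞ } and ω̂ = sup{ γ ≥ 0 : limsup_{t→∞} t^γ ψ(t) < ∞ }. Then ω ≥ ( 1 − ω̂ + √( (1 − ω̂)² + 4ω̂(2ω̂² − 2ω̂ + 1) ) ) / 2. -/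
open Filter

/-- The irrationality measure function for a pair of linear forms in two variables
(the case `m = n = 2`):
`psiM Θ t = min_{x ∈ ℤ², 0 < max|x_j| ≤ t} max_i ‖θ_i¹x₁ + θ_i²x₂‖`. -/
noncomputable def psiM (θ11 θ12 θ21 θ22 : ℝ) (t : ℝ) : ℝ :=
  sInf {v : ℝ | ∃ x₁ x₂ : ℤ, 0 < max |x₁| |x₂| ∧ ((max |x₁| |x₂| : ℤ) : ℝ) ≤ t ∧
    v = max (nint (θ11 * x₁ + θ12 * x₂)) (nint (θ21 * x₁ + θ22 * x₂))}

/-! ### Height, linear forms and error of an integer vector `(x₁, x₂, y₁, y₂)` -/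

/-- The first two coordinates, as reals. -/
def xCoord (v : Fin 4 → ℤ) (i : Fin 2) : ℝ := ![(v 0 : ℝ), (v 1 : ℝ)] i

/-- The linear forms `θ_m¹ x₁ + θ_m² x₂ - y_m`. -/
def linForm (Θ : Fin 2 → Fin 2 → ℝ) (v : Fin 4 → ℤ) (m : Fin 2) : ℝ :=
  Θ m 0 * v 0 + Θ m 1 * v 1 - ![(v 2 : ℝ), (v 3 : ℝ)] m

noncomputable def height (v : Fin 4 → ℤ) : ℝ := max |xCoord v 0| |xCoord v 1|

noncomputable def err (Θ : Fin 2 → Fin 2 → ℝ) (v : Fin 4 → ℤ) : ℝ :=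
  max |linForm Θ v 0| |linForm Θ v 1|

lemma abs_xCoord_le (v : Fin 4 → ℤ) (i : Fin 2) : |xCoord v i| ≤ height v := by
  fin_cases i
  · exact le_max_left _ _
  · exact le_max_right _ _

lemma abs_linForm_le (Θ : Fin 2 → Fin 2 → ℝ) (v : Fin 4 → ℤ) (m : Fin 2) :
    |linForm Θ v m| ≤ err Θ v := by
  fin_cases m
  · exact le_max_left _ _
  · exact le_max_right _ _

lemma exists_abs_xCoord_eq (v : Fin 4 → ℤ) : ∃ i, |xCoord v i| = height v := by
  rcases max_choice |xCoord v 0| |xCoord v 1| with h | h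
  exacts [⟨0, h.symm⟩, ⟨1, h.symm⟩]

lemma exists_abs_linForm_eq (Θ : Fin 2 → Fin 2 → ℝ) (v : Fin 4 → ℤ) :
    ∃ m, |linForm Θ v m| = err Θ v := by
  rcases max_choice |linForm Θ v 0| |linForm Θ v 1| with h | h
  exacts [⟨0, h.symm⟩, ⟨1, h.symm⟩]

lemma height_lt_iff {v : Fin 4 → ℤ} {c : ℝ} : height v < c ↔ ∀ i, |xCoord v i| < c := by
  rw [height, max_lt_iff, Fin.forall_fin_two]

lemma err_lt_iff {Θ : Fin 2 → Fin 2 → ℝ} {v : Fin 4 → ℤ} {c : ℝ} :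
    err Θ v < c ↔ ∀ m, |linForm Θ v m| < c := by
  rw [err, max_lt_iff, Fin.forall_fin_two]

lemma height_nonneg (v : Fin 4 → ℤ) : 0 ≤ height v := (abs_nonneg _).trans (abs_xCoord_le v 0)

lemma err_nonneg (Θ : Fin 2 → Fin 2 → ℝ) (v : Fin 4 → ℤ) : 0 ≤ err Θ v :=
  (abs_nonneg _).trans (abs_linForm_le Θ v 0)

lemma xCoord_add (u v : Fin 4 → ℤ) (i : Fin 2) : xCoord (u + v) i = xCoord u i + xCoord v i := by
  fin_cases i <;> simp [xCoord]

lemma xCoord_sub (u v : Fin 4 → ℤ) (i : Fin 2) : xCoord (u - v) i = xCoord u i - xCoord v i := by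
  fin_cases i <;> simp [xCoord]

lemma linForm_add (Θ : Fin 2 → Fin 2 → ℝ) (u v : Fin 4 → ℤ) (m : Fin 2) :
    linForm Θ (u + v) m = linForm Θ u m + linForm Θ v m := by
  fin_cases m <;> simp [linForm] <;> ring

lemma linForm_sub (Θ : Fin 2 → Fin 2 → ℝ) (u v : Fin 4 → ℤ) (m : Fin 2) :
    linForm Θ (u - v) m = linForm Θ u m - linForm Θ v m := by
  fin_cases m <;> simp [linForm] <;> ring

/-! ### Mixed minors -/

/-- The mixed minors of two vectors with respect to one `x`-coordinate and one linear form. -/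
def mixedMinor (Θ : Fin 2 → Fin 2 → ℝ) (u v : Fin 4 → ℤ) (i m : Fin 2) : ℝ :=
  xCoord u i * linForm Θ v m - xCoord v i * linForm Θ u m

lemma abs_mixedMinor_le (Θ : Fin 2 → Fin 2 → ℝ) {u v : Fin 4 → ℤ} (h : height u ≤ height v)
    (he : err Θ v ≤ err Θ u) (i m : Fin 2) :
    |mixedMinor Θ u v i m| ≤ 2 * (height v * err Θ u) := by
  have h1 : |xCoord u i * linForm Θ v m| ≤ height v * err Θ u := by
    rw [abs_mul]
    exact mul_le_mul ((abs_xCoord_le u i).trans h) ((abs_linForm_le Θ v m).trans he)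
      (abs_nonneg _) (height_nonneg v)
  have h2 : |xCoord v i * linForm Θ u m| ≤ height v * err Θ u := by
    rw [abs_mul]
    exact mul_le_mul (abs_xCoord_le v i) (abs_linForm_le Θ u m) (abs_nonneg _) (height_nonneg v)
  have := abs_sub (xCoord u i * linForm Θ v m) (xCoord v i * linForm Θ u m)
  unfold mixedMinor
  linarith

/-- If all `2 × 2` minors of the pairs `(p, e)`, `(q, f)` are small, then the pairs are close to
each other up to sign. -/
lemma close_of_minors_small {ι κ : Type*} {p q : ι → ℝ} {e f : κ → ℝ} {X L : ℝ}
    (hX : 0 < X) (hL : 0 < L) (hp : ∀ i, |p i| ≤ X) (hf : ∀ m, |f m| ≤ L)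
    {i₀ : ι} (hi₀ : |q i₀| = X) {m₀ : κ} (hm₀ : |e m₀| = L)
    (hM : ∀ i m, |p i * f m - q i * e m| < X * L / 4) :
    ((∀ i, |p i - q i| < X) ∧ ∀ m, |e m - f m| < L) ∨
      ((∀ i, |p i + q i| < X) ∧ ∀ m, |e m + f m| < L) := by
  have hq0 : q i₀ ≠ 0 := by rintro h; simp [h] at hi₀; linarith
  have he0 : e m₀ ≠ 0 := by rintro h; simp [h] at hm₀; linarith
  obtain ⟨a, ha⟩ : ∃ a, f m₀ = a * e m₀ := ⟨f m₀ / e m₀, by field_simp⟩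
  obtain ⟨b, hb⟩ : ∃ b, p i₀ = b * q i₀ := ⟨p i₀ / q i₀, by field_simp⟩
  have ha1 : |a| ≤ 1 := by
    have := hf m₀
    rw [ha, abs_mul, hm₀] at this
    exact le_of_mul_le_mul_right (by linarith) hL
  have hb1 : |b| ≤ 1 := by
    have := hp i₀
    rw [hb, abs_mul, hi₀] at this
    exact le_of_mul_le_mul_right (by linarith) hX
  have hpa : ∀ i, |p i * a - q i| < X / 4 := by
    intro i
    have h := hM i m₀
    rw [ha, show p i * (a * e m₀) - q i * e m₀ = (p i * a - q i) * e m₀ by ring, abs_mul, hm₀] at h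
    exact lt_of_mul_lt_mul_right (by linarith) hL.le
  have hfb : ∀ m, |b * f m - e m| < L / 4 := by
    intro m
    have h := hM i₀ m
    rw [hb, show b * q i₀ * f m - q i₀ * e m = q i₀ * (b * f m - e m) by ring, abs_mul, hi₀] at h
    exact lt_of_mul_lt_mul_left (by linarith) hX.le
  have hab : |b * a - 1| < 1 / 4 := by
    have h := hpa i₀
    rw [hb, show b * q i₀ * a - q i₀ = (b * a - 1) * q i₀ by ring, abs_mul, hi₀] at h
    exact lt_of_mul_lt_mul_right (by linarith) hX.le
  rw [abs_le] at ha1 hb1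
  rw [abs_lt] at hab
  rcases le_total 0 a with h0 | h0
  · left
    have hb3 : 3 / 4 < b := by nlinarith
    have ha3 : 3 / 4 < a := by nlinarith
    refine ⟨fun i => ?_, fun m => ?_⟩
    · have h1 := abs_lt.1 (hpa i)
      have h2 := abs_le.1 (hp i)
      rw [abs_lt]; constructor <;> nlinarith
    · have h1 := abs_lt.1 (hfb m)
      have h2 := abs_le.1 (hf m)
      rw [abs_lt]; constructor <;> nlinarith
  · right
    have hb3 : b < -3 / 4 := by nlinarith
    have ha3 : a < -3 / 4 := by nlinarith
    refine ⟨fun i => ?_, fun m => ?_⟩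
    · have h1 := abs_lt.1 (hpa i)
      have h2 := abs_le.1 (hp i)
      rw [abs_lt]; constructor <;> nlinarith
    · have h1 := abs_lt.1 (hfb m)
      have h2 := abs_le.1 (hf m)
      rw [abs_lt]; constructor <;> nlinarith

/-! ### Consecutive minimal points -/

/-- `u` and `v` are consecutive minimal points: no nonzero integer vector of height less than that
of `v` has an error smaller than that of `u`. -/
structure Consecutive (Θ : Fin 2 → Fin 2 → ℝ) (u v : Fin 4 → ℤ) : Prop where
  height_pos : 0 < height u
  height_lt : height u < height v
  err_pos : 0 < err Θ v
  err_lt : err Θ v < err Θ u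
  err_le : ∀ w : Fin 4 → ℤ, w ≠ 0 → height w < height v → err Θ u ≤ err Θ w

namespace Consecutive

variable {Θ : Fin 2 → Fin 2 → ℝ} {u v : Fin 4 → ℤ}

lemma mul_pos (h : Consecutive Θ u v) : 0 < height v * err Θ u :=
  _root_.mul_pos (h.height_pos.trans h.height_lt) (h.err_pos.trans h.err_lt)

lemma exists_le_mixedMinor (h : Consecutive Θ u v) :
    ∃ i m, height v * err Θ u / 4 ≤ |mixedMinor Θ u v i m| := by
  by_contra! hM
  obtain ⟨i₀, hi₀⟩ := exists_abs_xCoord_eq v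
  obtain ⟨m₀, hm₀⟩ := exists_abs_linForm_eq Θ u
  rcases close_of_minors_small (h.height_pos.trans h.height_lt) (h.err_pos.trans h.err_lt)
    (fun i => (abs_xCoord_le u i).trans h.height_lt.le)
    (fun m => (abs_linForm_le Θ v m).trans h.err_lt.le) hi₀ hm₀ hM with ⟨h1, h2⟩ | ⟨h1, h2⟩
  · have hne : u - v ≠ 0 := by
      intro h0
      rw [sub_eq_zero] at h0
      exact h.height_lt.ne (by rw [h0])
    have := h.err_le _ hne (height_lt_iff.2 fun i => by rw [xCoord_sub]; exact h1 i)
    exact this.not_gt (err_lt_iff.2 fun m => by rw [linForm_sub]; exact h2 m)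
  · have hne : u + v ≠ 0 := by
      intro h0
      have h0 : v = 0 - u := by rw [← h0]; abel
      refine h.height_lt.ne ?_
      simp [h0, height, xCoord]
    have := h.err_le _ hne (height_lt_iff.2 fun i => by rw [xCoord_add]; exact h1 i)
    exact this.not_gt (err_lt_iff.2 fun m => by rw [linForm_add]; exact h2 m)

lemma exists_mixedMinor_ne_zero (h : Consecutive Θ u v) : ∃ i m, mixedMinor Θ u v i m ≠ 0 := by
  obtain ⟨i, m, him⟩ := h.exists_le_mixedMinor
  refine ⟨i, m, fun h0 => ?_⟩
  have := h.mul_pos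
  rw [h0, abs_zero] at him
  linarith

end Consecutive

/-- The inclusion of `ℤ⁴` in `ℚ⁴`. -/
def ratVec (v : Fin 4 → ℤ) : Fin 4 → ℚ := fun i => (v i : ℚ)

lemma xCoord_of_ratVec {Θ : Fin 2 → Fin 2 → ℝ} {u v w : Fin 4 → ℤ} {a b : ℚ}
    (hw : ratVec w = a • ratVec u + b • ratVec v) :
    (∀ i, xCoord w i = a * xCoord u i + b * xCoord v i) ∧
      ∀ m, linForm Θ w m = a * linForm Θ u m + b * linForm Θ v m := by
  have key : ∀ i, (w i : ℝ) = a * u i + b * v i := by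
    intro i
    have := congrFun hw i
    simp only [ratVec, Pi.add_apply, Pi.smul_apply, smul_eq_mul] at this
    exact_mod_cast congrArg (fun q : ℚ => (q : ℝ)) this
  constructor
  · intro i; fin_cases i <;> simp [xCoord, key]
  · intro m; fin_cases m <;> simp [linForm, key] <;> ring

namespace Consecutive

variable {Θ : Fin 2 → Fin 2 → ℝ} {u v u' v' w : Fin 4 → ℤ}

lemma linearIndependent (h : Consecutive Θ u v) :
    LinearIndependent ℚ ![ratVec u, ratVec v] := by
  rw [LinearIndependent.pair_iff]
  intro s t hst
  obtain ⟨i, m, him⟩ := h.exists_mixedMinor_ne_zero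
  have h0 : ratVec 0 = s • ratVec u + t • ratVec v := by
    rw [hst]; ext; simp [ratVec]
  obtain ⟨hx, hl⟩ := xCoord_of_ratVec (Θ := Θ) h0
  have hx := hx i
  have hl := hl m
  have hx0 : xCoord 0 i = 0 := by fin_cases i <;> simp [xCoord]
  have hl0 : linForm Θ 0 m = 0 := by fin_cases m <;> simp [linForm]
  rw [hx0] at hx
  rw [hl0] at hl
  unfold mixedMinor at him
  constructor
  · have : (s : ℝ) * (xCoord u i * linForm Θ v m - xCoord v i * linForm Θ u m) = 0 := by
      linear_combination xCoord v i * hl - linForm Θ v m * hx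
    exact_mod_cast (mul_eq_zero.1 this).resolve_right him
  · have : (t : ℝ) * (xCoord u i * linForm Θ v m - xCoord v i * linForm Θ u m) = 0 := by
      linear_combination linForm Θ u m * hx - xCoord u i * hl
    exact_mod_cast (mul_eq_zero.1 this).resolve_right him

/-- Consecutive minimal points form a basis of the integer points in the rational plane they
span. -/
lemma exists_int_comb (h : Consecutive Θ u v) {a b : ℚ}
    (hw : ratVec w = a • ratVec u + b • ratVec v) :
    ∃ m n : ℤ, ratVec w = (m : ℚ) • ratVec u + (n : ℚ) • ratVec v := by
  refine ⟨round a, round b, ?_⟩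
  set w' : Fin 4 → ℤ := w - (round a) • u - (round b) • v with hw'
  have hr : ratVec w' = (a - round a) • ratVec u + (b - round b) • ratVec v := by
    have : ratVec w' = ratVec w - (round a : ℚ) • ratVec u - (round b : ℚ) • ratVec v := by
      ext i; simp [ratVec, hw']
    rw [this, hw]
    module
  suffices hz : w' = 0 by
    rw [hz] at hr
    have h0 : ratVec 0 = 0 := by ext; simp [ratVec]
    rw [h0] at hr
    rw [hw, show a • ratVec u + b • ratVec v = ((a - round a) • ratVec u + (b - round b) • ratVec v) +
      ((round a : ℚ) • ratVec u + (round b : ℚ) • ratVec v) by module, ← hr, zero_add]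
  by_contra hne
  obtain ⟨hx, hl⟩ := xCoord_of_ratVec (Θ := Θ) hr
  have ha : |((a - round a : ℚ) : ℝ)| ≤ 1 / 2 := by
    have := abs_sub_round a
    have h2 : ((|a - round a| : ℚ) : ℝ) ≤ ((1 / 2 : ℚ) : ℝ) := by exact_mod_cast this
    simpa using h2
  have hb : |((b - round b : ℚ) : ℝ)| ≤ 1 / 2 := by
    have := abs_sub_round b
    have h2 : ((|b - round b| : ℚ) : ℝ) ≤ ((1 / 2 : ℚ) : ℝ) := by exact_mod_cast this
    simpa using h2
  have key : ∀ y z Y Z : ℝ, |y| ≤ Y → |z| ≤ Z →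
      |((a - round a : ℚ) : ℝ) * y + ((b - round b : ℚ) : ℝ) * z| ≤ Y / 2 + Z / 2 := by
    intro y z Y Z hy hz
    refine (abs_add_le _ _).trans ?_
    rw [abs_mul, abs_mul]
    have h1 := mul_le_mul ha hy (abs_nonneg _) (by norm_num)
    have h2 := mul_le_mul hb hz (abs_nonneg _) (by norm_num)
    linarith
  have h1 : height w' < height v := height_lt_iff.2 fun i => by
    rw [hx]
    have := key _ _ _ _ (abs_xCoord_le u i) (abs_xCoord_le v i)
    linarith [h.height_lt]
  have h2 : err Θ w' < err Θ u := err_lt_iff.2 fun m => by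
    rw [hl]
    have := key _ _ _ _ (abs_linForm_le Θ u m) (abs_linForm_le Θ v m)
    linarith [h.err_lt]
  exact (h.err_le _ hne h1).not_gt h2

/-- Two pairs of consecutive minimal points in the same rational plane have comparable products
`height * err`. -/
lemma mul_le_of_mem_span (h : Consecutive Θ u v) (h' : Consecutive Θ u' v')
    (hu' : ratVec u' ∈ Submodule.span ℚ {ratVec u, ratVec v})
    (hv' : ratVec v' ∈ Submodule.span ℚ {ratVec u, ratVec v}) :
    height v * err Θ u ≤ 8 * (height v' * err Θ u') := by
  obtain ⟨a, b, hab⟩ := Submodule.mem_span_pair.1 hu'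
  obtain ⟨c, d, hcd⟩ := Submodule.mem_span_pair.1 hv'
  obtain ⟨a, b, hab⟩ := h.exists_int_comb hab.symm
  obtain ⟨c, d, hcd⟩ := h.exists_int_comb hcd.symm
  obtain ⟨hx, hl⟩ := xCoord_of_ratVec (Θ := Θ) hab
  obtain ⟨hx', hl'⟩ := xCoord_of_ratVec (Θ := Θ) hcd
  have key : ∀ i m, mixedMinor Θ u' v' i m = ((a * d - b * c : ℤ) : ℝ) * mixedMinor Θ u v i m := by
    intro i m
    simp only [mixedMinor, hx, hl, hx', hl']
    push_cast
    ring
  have hne : a * d - b * c ≠ 0 := by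
    intro h0
    obtain ⟨i, m, him⟩ := h'.exists_mixedMinor_ne_zero
    rw [key, h0] at him
    simp at him
  obtain ⟨i, m, him⟩ := h.exists_le_mixedMinor
  have h1 : |mixedMinor Θ u v i m| ≤ |mixedMinor Θ u' v' i m| := by
    rw [key, abs_mul]
    have : (1 : ℝ) ≤ |((a * d - b * c : ℤ) : ℝ)| := by
      exact_mod_cast Int.one_le_abs hne
    nlinarith [abs_nonneg (mixedMinor Θ u v i m)]
  have h2 := abs_mixedMinor_le Θ h'.height_lt.le h'.err_lt.le i m
  linarith

/-- The minor of the first two coordinates does not vanish when `height * err` is small. -/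
lemma x_minor_ne_zero (h : Consecutive Θ u v) (hs : 2 * (height v * err Θ u) < 1) :
    u 0 * v 1 - u 1 * v 0 ≠ 0 := by
  intro h0
  have h0' : (u 0 * v 1 - u 1 * v 0 : ℝ) = 0 := by exact_mod_cast h0
  obtain ⟨i, m, him⟩ := h.exists_mixedMinor_ne_zero
  have hint : ∃ n : ℤ, mixedMinor Θ u v i m = n := by
    fin_cases i <;> fin_cases m <;> simp only [mixedMinor, xCoord, linForm] <;> simp
    · exact ⟨v 0 * u 2 - u 0 * v 2, by push_cast; linear_combination Θ 0 1 * h0'⟩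
    · exact ⟨v 0 * u 3 - u 0 * v 3, by push_cast; linear_combination Θ 1 1 * h0'⟩
    · exact ⟨v 1 * u 2 - u 1 * v 2, by push_cast; linear_combination -Θ 0 0 * h0'⟩
    · exact ⟨v 1 * u 3 - u 1 * v 3, by push_cast; linear_combination -Θ 1 0 * h0'⟩
  obtain ⟨n, hn⟩ := hint
  have h1 := abs_mixedMinor_le Θ h.height_lt.le h.err_lt.le i m
  rw [hn] at h1 him
  have h2 : |(n : ℝ)| < 1 := by linarith
  have h3 : |n| < 1 := by exact_mod_cast h2
  rw [Int.abs_lt_one_iff] at h3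
  simp [h3] at him

end Consecutive

/-- A rational hyperplane cannot contain consecutive minimal points for which `height * err` is
arbitrarily small. -/
lemma exists_pos_forall_functional_eq_zero {Θ : Fin 2 → Fin 2 → ℝ}
    (hindep : LinearIndependent ℚ ![(1 : ℝ), Θ 0 0, Θ 0 1, Θ 1 0, Θ 1 1])
    {f : (Fin 4 → ℚ) →ₗ[ℚ] ℚ} (hf : f ≠ 0) :
    ∃ δ > 0, ∀ u v, Consecutive Θ u v → height v * err Θ u < δ → f (ratVec u) = 0 →
      f (ratVec v) ≠ 0 := by
  obtain ⟨c, hc⟩ : ∃ c : Fin 4 → ℚ, ∀ w, f w = ∑ i, c i * w i := by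
    refine ⟨fun i => f (Pi.single i 1), fun w => ?_⟩
    conv_lhs => rw [pi_eq_sum_univ' w]
    simp [mul_comm, map_sum]
  have hc0 : ¬ (c 0 = 0 ∧ c 1 = 0 ∧ c 2 = 0 ∧ c 3 = 0) := by
    rintro ⟨h0, h1, h2, h3⟩
    exact hf (LinearMap.ext fun w => by simp [hc, Fin.sum_univ_four, h0, h1, h2, h3])
  set α : ℝ := c 0 + c 2 * Θ 0 0 + c 3 * Θ 1 0 with hα
  set β : ℝ := c 1 + c 2 * Θ 0 1 + c 3 * Θ 1 1 with hβ
  have hpos : 0 < |α| + |β| := by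
    have hrel := Fintype.linearIndependent_iff.1 hindep
    by_contra hle
    have h1 : α = 0 := abs_eq_zero.1 (by linarith [abs_nonneg α, abs_nonneg β])
    have h2 : β = 0 := abs_eq_zero.1 (by linarith [abs_nonneg α, abs_nonneg β])
    have e1 := hrel ![c 0, c 2, 0, c 3, 0] (by
      simp [Fin.sum_univ_five, Rat.smul_def]; linarith)
    have e2 := hrel ![c 1, 0, c 2, 0, c 3] (by
      simp [Fin.sum_univ_five, Rat.smul_def]; linarith)
    exact hc0 ⟨by simpa using e1 0, by simpa using e2 0, by simpa using e1 1, by simpa using e1 3⟩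
  set K : ℝ := |(c 2 : ℝ)| + |(c 3 : ℝ)| with hK
  have hK0 : 0 ≤ K := by positivity
  refine ⟨min (1 / 2) ((|α| + |β|) / (4 * K + 1)), by positivity, fun u v huv hs hu hv => ?_⟩
  have hs1 : height v * err Θ u < 1 / 2 := hs.trans_le (min_le_left _ _)
  have hs2 : height v * err Θ u < (|α| + |β|) / (4 * K + 1) := hs.trans_le (min_le_right _ _)
  rw [lt_div_iff₀ (by positivity)] at hs2
  have hp := huv.mul_pos
  have hlin : ∀ w : Fin 4 → ℤ, f (ratVec w) = 0 →
      α * w 0 + β * w 1 = c 2 * linForm Θ w 0 + c 3 * linForm Θ w 1 := by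
    intro w hw
    rw [hc, Fin.sum_univ_four] at hw
    have hw : (c 0 * w 0 + c 1 * w 1 + c 2 * w 2 + c 3 * w 3 : ℝ) = 0 := by
      simp only [ratVec] at hw
      exact_mod_cast congrArg (fun q : ℚ => (q : ℝ)) hw
    simp [linForm, hα, hβ]
    linear_combination hw
  have hu := hlin u hu
  have hv := hlin v hv
  have hM := fun i m => abs_mixedMinor_le Θ huv.height_lt.le huv.err_lt.le i m
  set D : ℝ := u 0 * v 1 - u 1 * v 0 with hD
  have hbound : ∀ i, |(c 2 : ℝ) * mixedMinor Θ u v i 0 + c 3 * mixedMinor Θ u v i 1| ≤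
      K * (2 * (height v * err Θ u)) := by
    intro i
    refine (abs_add_le _ _).trans ?_
    rw [abs_mul, abs_mul, hK, add_mul]
    gcongr <;> apply hM
  have hαD : |α| * |D| ≤ K * (2 * (height v * err Θ u)) := by
    rw [← abs_mul, ← abs_neg]
    have e : -(α * D) = c 2 * mixedMinor Θ u v 1 0 + c 3 * mixedMinor Θ u v 1 1 := by
      simp [mixedMinor, xCoord, D]
      linear_combination (-v 1 : ℝ) * hu + (u 1 : ℝ) * hv
    exact e ▸ hbound 1
  have hβD : |β| * |D| ≤ K * (2 * (height v * err Θ u)) := by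
    rw [← abs_mul]
    have e : β * D = c 2 * mixedMinor Θ u v 0 0 + c 3 * mixedMinor Θ u v 0 1 := by
      simp [mixedMinor, xCoord, D]
      linear_combination -(v 0 : ℝ) * hu + (u 0 : ℝ) * hv
    exact e ▸ hbound 0
  have hD1 : 1 ≤ |D| := by
    have := Int.one_le_abs (huv.x_minor_ne_zero (by linarith))
    rw [hD]
    exact_mod_cast this
  nlinarith

/-! ### A determinant bound -/

lemma one_le_of_linearIndependent (Θ : Fin 2 → Fin 2 → ℝ) {a b c d : Fin 4 → ℤ}
    (hab : height a ≤ height b) (hbc : height b ≤ height c) (hcd : height c ≤ height d)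
    (eab : err Θ b ≤ err Θ a) (ebc : err Θ c ≤ err Θ b) (ecd : err Θ d ≤ err Θ c)
    (hli : LinearIndependent ℚ ![ratVec d, ratVec a, ratVec b, ratVec c]) :
    1 ≤ 24 * (height d * height c * err Θ b * err Θ a) := by
  set M : Matrix (Fin 4) (Fin 4) ℤ := Matrix.of ![d, a, b, c] with hM
  have hdet : M.det ≠ 0 := by
    have hu : IsUnit (M.map (Int.castRingHom ℚ)) := by
      rw [← Matrix.linearIndependent_rows_iff_isUnit]
      have he : (M.map (Int.castRingHom ℚ)).row = ![ratVec d, ratVec a, ratVec b, ratVec c] := by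
        ext i j
        fin_cases i <;> simp [hM, ratVec, Matrix.row]
      rw [he]
      exact hli
    rw [Matrix.isUnit_iff_isUnit_det, isUnit_iff_ne_zero] at hu
    intro h0
    apply hu
    have := RingHom.map_det (Int.castRingHom ℚ) M
    rw [RingHom.mapMatrix_apply] at this
    rw [← this, h0, map_zero]
  have h1 : (1 : ℝ) ≤ |(M.det : ℝ)| := by exact_mod_cast Int.one_le_abs hdet
  let P : (Fin 4 → ℤ) → (Fin 4 → ℤ) → ℝ := fun u v =>
    xCoord u 0 * xCoord v 1 - xCoord v 0 * xCoord u 1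
  let Q : (Fin 4 → ℤ) → (Fin 4 → ℤ) → ℝ := fun u v =>
    linForm Θ u 0 * linForm Θ v 1 - linForm Θ v 0 * linForm Θ u 1
  have hexp : (M.det : ℝ) = P d a * Q b c - P d b * Q a c + P d c * Q a b + P a b * Q d c
      - P a c * Q d b + P b c * Q d a := by
    simp [hM, P, Q, Matrix.det_succ_row_zero, Fin.sum_univ_succ, xCoord, linForm, Fin.succAbove]
    ring
  have hP : ∀ u v, |P u v| ≤ 2 * (height u * height v) := by
    intro u v
    refine (abs_sub _ _).trans ?_
    rw [abs_mul, abs_mul]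
    have h1 := mul_le_mul (abs_xCoord_le u 0) (abs_xCoord_le v 1) (abs_nonneg _) (height_nonneg u)
    have h2 := mul_le_mul (abs_xCoord_le v 0) (abs_xCoord_le u 1) (abs_nonneg _) (height_nonneg v)
    linarith
  have hQ : ∀ u v, |Q u v| ≤ 2 * (err Θ u * err Θ v) := by
    intro u v
    refine (abs_sub _ _).trans ?_
    rw [abs_mul, abs_mul]
    have h1 := mul_le_mul (abs_linForm_le Θ u 0) (abs_linForm_le Θ v 1) (abs_nonneg _)
      (err_nonneg Θ u)
    have h2 := mul_le_mul (abs_linForm_le Θ v 0) (abs_linForm_le Θ u 1) (abs_nonneg _)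
      (err_nonneg Θ v)
    linarith
  have key : ∀ p q r s, height p ≤ height d → height q ≤ height c → err Θ r ≤ err Θ b →
      err Θ s ≤ err Θ a → |P p q * Q s r| ≤ 4 * (height d * height c * err Θ b * err Θ a) := by
    intro p q r s hp hq hr hs
    rw [abs_mul]
    have h1 : |P p q| ≤ 2 * (height d * height c) := (hP p q).trans (by
      gcongr
      exacts [height_nonneg _, height_nonneg _])
    have h2 : |Q s r| ≤ 2 * (err Θ a * err Θ b) := (hQ s r).trans (by
      gcongr
      exacts [err_nonneg _ _, err_nonneg _ _])
    have h3 := mul_le_mul h1 h2 (abs_nonneg _)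
      (by have := height_nonneg c; have := height_nonneg d; positivity)
    linarith
  have k1 := abs_le.1 (key d a c b le_rfl (hab.trans hbc) ebc eab)
  have k2 := abs_le.1 (key d b c a le_rfl hbc ebc le_rfl)
  have k3 := abs_le.1 (key d c b a le_rfl le_rfl le_rfl le_rfl)
  have k4 := abs_le.1 (key a b c d ((hab.trans hbc).trans hcd) hbc ebc ((ecd.trans ebc).trans eab))
  have k5 := abs_le.1 (key a c b d ((hab.trans hbc).trans hcd) le_rfl le_rfl
    ((ecd.trans ebc).trans eab))
  have k6 : |P b c * Q d a| ≤ 4 * (height d * height c * err Θ b * err Θ a) := by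
    have : Q d a = - Q a d := by simp only [Q]; ring
    rw [this, mul_neg, abs_neg]
    exact key b c d a (hbc.trans hcd) le_rfl (ecd.trans ebc) le_rfl
  have k6 := abs_le.1 k6
  refine h1.trans ?_
  rw [hexp, abs_le]
  constructor <;> linarith

/-! ### Changes of plane in a sequence of vectors -/

lemma finrank_span_pair_eq_two {V : Type*} [AddCommGroup V] [Module ℚ V] {a b : V}
    (h : LinearIndependent ℚ ![a, b]) :
    Module.finrank ℚ (Submodule.span ℚ {a, b}) = 2 := by
  have := finrank_span_eq_card h
  rwa [Matrix.range_cons_cons_empty, Fintype.card_fin] at this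

lemma span_ne_top_of_card_le_three {t : Finset (Fin 4 → ℚ)} (ht : t.card ≤ 3) :
    Submodule.span ℚ (t : Set (Fin 4 → ℚ)) ≠ ⊤ := by
  intro h
  have h3 := finrank_span_finset_le_card (R := ℚ) t
  rw [Set.finrank, h, finrank_top, Module.finrank_fin_fun] at h3
  omega

/-- If no tail of a sequence in `ℚ⁴` lies in a hyperplane, then arbitrarily far there are stretches
of terms in a common plane such that the two neighbours of the stretch and the plane span `ℚ⁴`. -/
lemma exists_plane_stretch {s : ℕ → Fin 4 → ℚ}
    (hpair : ∀ j, LinearIndependent ℚ ![s j, s (j + 1)])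
    (hhyp : ∀ f : (Fin 4 → ℚ) →ₗ[ℚ] ℚ, f ≠ 0 → ∀ N, ∃ j ≥ N, f (s j) ≠ 0) (N : ℕ) :
    ∃ j l, N ≤ j ∧ j < l ∧ s l ∈ Submodule.span ℚ {s (j + 1), s (j + 2)} ∧
      s (l + 1) ∈ Submodule.span ℚ {s (j + 1), s (j + 2)} ∧
      LinearIndependent ℚ ![s (l + 2), s j, s l, s (l + 1)] := by
  classical
  let W : ℕ →o Submodule ℚ (Fin 4 → ℚ) :=
    ⟨fun n => Submodule.span ℚ (s '' Set.Icc N n), fun m n hmn =>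
      Submodule.span_mono (Set.image_mono (Set.Icc_subset_Icc_right hmn))⟩
  have hWmem : ∀ i n, N ≤ i → i ≤ n → s i ∈ W n := fun i n h1 h2 =>
    Submodule.subset_span ⟨i, ⟨h1, h2⟩, rfl⟩
  have htop : ∃ n, W n = ⊤ := by
    obtain ⟨n, hn⟩ := monotone_stabilizes_iff_noetherian.2 inferInstance W
    refine ⟨n, ?_⟩
    by_contra hne
    obtain ⟨f, hf0, hf⟩ := Submodule.exists_le_ker_of_lt_top _ (lt_top_iff_ne_top.2 hne)
    obtain ⟨j, hj, hfj⟩ := hhyp f hf0 N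
    refine hfj (hf ?_)
    rw [hn (max n j) (le_max_left _ _)]
    exact hWmem _ _ hj (le_max_right _ _)
  have hn := Nat.find_spec htop
  have hmin := fun m (hm : m < Nat.find htop) => Nat.find_min htop hm
  generalize Nat.find htop = n at hn hmin
  have hnN : N + 2 < n := by
    by_contra hle
    refine span_ne_top_of_card_le_three (t := (Finset.Icc N (N + 2)).image s)
      (Finset.card_image_le.trans (by simp; omega)) ?_
    rw [Finset.coe_image, Finset.coe_Icc]
    exact top_le_iff.1 (hn ▸ W.monotone (by omega : n ≤ N + 2))
  obtain ⟨l, rfl⟩ : ∃ l, n = l + 2 := ⟨n - 2, by omega⟩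
  have hlast : s (l + 2) ∉ W (l + 1) := by
    intro hmem
    refine hmin (l + 1) (by omega) (top_le_iff.1 (hn ▸ Submodule.span_le.2 ?_))
    rintro _ ⟨i, ⟨hi1, hi2⟩, rfl⟩
    rcases Nat.lt_or_ge i (l + 2) with hi | hi
    · exact hWmem i _ hi1 (by omega)
    · rwa [show i = l + 2 by omega]
  let P := Submodule.span ℚ {s l, s (l + 1)}
  have hout : ∃ j, N ≤ j ∧ j ≤ l + 1 ∧ s j ∉ P := by
    by_contra! hall
    refine span_ne_top_of_card_le_three (t := {s (l + 2), s l, s (l + 1)}) Finset.card_le_three ?_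
    refine top_le_iff.1 (hn ▸ Submodule.span_le.2 ?_)
    rintro _ ⟨i, ⟨hi1, hi2⟩, rfl⟩
    rcases Nat.lt_or_ge i (l + 2) with hi | hi
    · have := hall i hi1 (by omega)
      refine Submodule.span_mono ?_ this
      simp
    · rw [show i = l + 2 by omega]
      exact Submodule.subset_span (by simp)
  have hsl : s l ∈ P := Submodule.subset_span (by simp)
  have hsl' : s (l + 1) ∈ P := Submodule.subset_span (by simp)
  obtain ⟨j, ⟨hNj, hjl, hjP⟩, hjmax⟩ : ∃ j, (N ≤ j ∧ j ≤ l + 1 ∧ s j ∉ P) ∧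
      ∀ i, j < i → i ≤ l + 1 → s i ∈ P := by
    obtain ⟨j₀, hj₀⟩ := hout
    have hg := Nat.findGreatest_spec (P := fun j => N ≤ j ∧ j ≤ l + 1 ∧ s j ∉ P) hj₀.2.1 hj₀
    refine ⟨_, hg, fun i hi hil => ?_⟩
    by_contra hiP
    exact Nat.findGreatest_is_greatest hi hil ⟨hg.1.trans hi.le, hil, hiP⟩
  have hjl : j < l := by
    rcases Nat.lt_or_ge j l with h | h
    · exact h
    · rcases h.eq_or_lt with rfl | h
      · exact absurd hsl hjP
      · exact absurd (show j = l + 1 by omega) (fun h => hjP (h ▸ hsl'))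
  have hspan : Submodule.span ℚ {s (j + 1), s (j + 2)} = P := by
    refine Submodule.eq_of_le_of_finrank_eq (Submodule.span_le.2 ?_) ?_
    · rintro _ (rfl | rfl)
      exacts [hjmax _ (by omega) (by omega), hjmax _ (by omega) (by omega)]
    · rw [finrank_span_pair_eq_two (hpair _), finrank_span_pair_eq_two (hpair _)]
  refine ⟨j, l, hNj, hjl, hspan ▸ hsl, hspan ▸ hsl', ?_⟩
  have h2 : LinearIndependent ℚ ![s j, s l, s (l + 1)] := by
    refine linearIndependent_finCons.2 ⟨hpair l, ?_⟩
    rwa [Matrix.range_cons_cons_empty]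
  refine linearIndependent_finCons.2 ⟨h2, fun hmem => hlast ?_⟩
  refine Submodule.span_le.2 ?_ hmem
  rintro _ ⟨i, rfl⟩
  fin_cases i
  exacts [hWmem j _ hNj (by omega), hWmem l _ (by omega) (by omega),
    hWmem (l + 1) _ (by omega) le_rfl]

/-! ### Existence of minimal points -/

/-- The height as a natural number. -/
def natHeight (v : Fin 4 → ℤ) : ℕ := max (v 0).natAbs (v 1).natAbs

lemma natHeight_cast (v : Fin 4 → ℤ) : (natHeight v : ℝ) = height v := by
  simp [natHeight, height, xCoord, Nat.cast_natAbs]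

/-- The integer vector with given first two coordinates and least error. -/
noncomputable def roundVec (Θ : Fin 2 → Fin 2 → ℝ) (x₁ x₂ : ℤ) : Fin 4 → ℤ :=
  ![x₁, x₂, round (Θ 0 0 * x₁ + Θ 0 1 * x₂), round (Θ 1 0 * x₁ + Θ 1 1 * x₂)]

lemma err_roundVec (Θ : Fin 2 → Fin 2 → ℝ) (x₁ x₂ : ℤ) : err Θ (roundVec Θ x₁ x₂) =
    max (nint (Θ 0 0 * x₁ + Θ 0 1 * x₂)) (nint (Θ 1 0 * x₁ + Θ 1 1 * x₂)) := by
  simp [err, linForm, roundVec, nint]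

lemma natHeight_roundVec (Θ : Fin 2 → Fin 2 → ℝ) (x₁ x₂ : ℤ) :
    natHeight (roundVec Θ x₁ x₂) = max x₁.natAbs x₂.natAbs := by
  simp [natHeight, roundVec]

lemma err_roundVec_le (Θ : Fin 2 → Fin 2 → ℝ) (w : Fin 4 → ℤ) :
    err Θ (roundVec Θ (w 0) (w 1)) ≤ err Θ w := by
  rw [err_roundVec]
  exact max_le_max (round_le _ _) (round_le _ _)

lemma err_roundVec_lt_one (Θ : Fin 2 → Fin 2 → ℝ) (x₁ x₂ : ℤ) : err Θ (roundVec Θ x₁ x₂) < 1 := by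
  rw [err_roundVec]
  exact (max_le (abs_sub_round _) (abs_sub_round _)).trans_lt (by norm_num)

lemma natHeight_pos_of_err_lt_one {Θ : Fin 2 → Fin 2 → ℝ} {w : Fin 4 → ℤ} (hw : w ≠ 0)
    (h : err Θ w < 1) : 0 < natHeight w := by
  by_contra h0
  have h00 : w 0 = 0 ∧ w 1 = 0 := by simp [natHeight] at h0; omega
  have h1 : ∀ n : ℤ, |(n : ℝ)| < 1 → n = 0 := fun n hn => by
    rw [← Int.abs_lt_one_iff]; exact_mod_cast hn
  have h2 := err_lt_iff.1 h 0
  have h3 := err_lt_iff.1 h 1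
  simp [linForm, h00] at h2 h3
  apply hw
  ext i
  fin_cases i
  exacts [h00.1, h00.2, h1 _ h2, h1 _ h3]

/-- Dirichlet's theorem for two linear forms in two variables. -/
lemma exists_err_le_inv (Θ : Fin 2 → Fin 2 → ℝ) {N : ℕ} (hN : 0 < N) :
    ∃ w : Fin 4 → ℤ, 0 < natHeight w ∧ natHeight w ≤ N ∧ err Θ w < 1 / N := by
  let g : Fin 2 → ℕ × ℕ → ℝ := fun m p => Θ m 0 * p.1 + Θ m 1 * p.2
  let F : ℕ × ℕ → ℕ × ℕ := fun p => (⌊N * Int.fract (g 0 p)⌋₊, ⌊N * Int.fract (g 1 p)⌋₊)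
  have hN' : (0 : ℝ) < N := by exact_mod_cast hN
  have hlt : ∀ x : ℝ, ⌊N * Int.fract x⌋₊ < N := fun x => by
    rw [Nat.floor_lt (by positivity)]
    nlinarith [Int.fract_lt_one x]
  obtain ⟨p, hp, q, hq, hpq, hF⟩ := Finset.exists_ne_map_eq_of_card_lt_of_maps_to
    (s := Finset.range (N + 1) ×ˢ Finset.range (N + 1)) (t := Finset.range N ×ˢ Finset.range N)
    (f := F) (by simp only [Finset.card_product, Finset.card_range]; nlinarith)
    (fun p _ => by simp [F, hlt])
  have hfr : ∀ x y : ℝ, ⌊N * Int.fract x⌋₊ = ⌊N * Int.fract y⌋₊ →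
      |Int.fract x - Int.fract y| < 1 / N := by
    intro x y hxy
    have h1 := Nat.floor_le (show 0 ≤ N * Int.fract x by positivity)
    have h2 := Nat.lt_floor_add_one (N * Int.fract x)
    have h3 := Nat.floor_le (show 0 ≤ N * Int.fract y by positivity)
    have h4 := Nat.lt_floor_add_one (N * Int.fract y)
    rw [hxy] at h1 h2
    rw [abs_lt, ← neg_div, lt_div_iff₀ hN', div_lt_iff₀ hN']
    constructor <;> nlinarith
  simp only [F, Prod.mk.injEq] at hF
  simp only [Finset.mem_product, Finset.mem_range] at hp hq
  refine ⟨![p.1 - q.1, p.2 - q.2, ⌊g 0 p⌋ - ⌊g 0 q⌋, ⌊g 1 p⌋ - ⌊g 1 q⌋], ?_, ?_, ?_⟩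
  · have : ¬ (p.1 = q.1 ∧ p.2 = q.2) := fun h => hpq (Prod.ext h.1 h.2)
    simp [natHeight]
    omega
  · simp [natHeight]
    omega
  · refine err_lt_iff.2 (Fin.forall_fin_two.2 ⟨?_, ?_⟩)
    · refine lt_of_eq_of_lt (congrArg abs ?_) (hfr _ _ hF.1)
      rw [← Int.self_sub_floor (g 0 p), ← Int.self_sub_floor (g 0 q)]
      simp [linForm, g, -Int.self_sub_floor]
      ring
    · refine lt_of_eq_of_lt (congrArg abs ?_) (hfr _ _ hF.2)
      rw [← Int.self_sub_floor (g 1 p), ← Int.self_sub_floor (g 1 q)]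
      simp [linForm, g, -Int.self_sub_floor]
      ring

lemma exists_isLeast_err (Θ : Fin 2 → Fin 2 → ℝ) {n : ℕ} (hn : 0 < n) :
    ∃ z : Fin 4 → ℤ, z ≠ 0 ∧ natHeight z ≤ n ∧ err Θ z < 1 ∧
      ∀ w : Fin 4 → ℤ, w ≠ 0 → natHeight w ≤ n → err Θ z ≤ err Θ w := by
  let S : Finset (ℤ × ℤ) := (Finset.Icc (-(n : ℤ)) n ×ˢ Finset.Icc (-(n : ℤ)) n).filter (· ≠ (0, 0))
  have hS : ∀ a b : ℤ, (a, b) ∈ S ↔ 0 < max a.natAbs b.natAbs ∧ max a.natAbs b.natAbs ≤ n := by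
    intro a b
    simp [S]
    omega
  obtain ⟨⟨a, b⟩, hab, hmin⟩ := S.exists_min_image (fun p => err Θ (roundVec Θ p.1 p.2))
    ⟨(1, 0), by rw [hS]; simp; omega⟩
  rw [hS] at hab
  refine ⟨roundVec Θ a b, ?_, ?_, err_roundVec_lt_one _ _ _, fun w hw hwn => ?_⟩
  · intro h0
    have := natHeight_roundVec Θ a b
    rw [h0] at this
    simp [natHeight] at this
    omega
  · rw [natHeight_roundVec]; exact hab.2
  · rcases lt_or_ge (err Θ w) 1 with h | h
    · exact (hmin (w 0, w 1) ((hS _ _).2 ⟨natHeight_pos_of_err_lt_one hw h, hwn⟩)).trans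
        (err_roundVec_le Θ w)
    · exact (err_roundVec_lt_one _ _ _).le.trans h

/-- A nonzero vector minimizing the error among the vectors of at most its height. -/
structure IsMinimalPoint (Θ : Fin 2 → Fin 2 → ℝ) (z : Fin 4 → ℤ) : Prop where
  ne_zero : z ≠ 0
  err_lt_one : err Θ z < 1
  err_le : ∀ w : Fin 4 → ℤ, w ≠ 0 → natHeight w ≤ natHeight z → err Θ z ≤ err Θ w

lemma IsMinimalPoint.exists_next {Θ : Fin 2 → Fin 2 → ℝ} (hpos : ∀ w, w ≠ 0 → 0 < err Θ w)
    {z : Fin 4 → ℤ} (hz : IsMinimalPoint Θ z) :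
    ∃ z', IsMinimalPoint Θ z' ∧ Consecutive Θ z z' := by
  classical
  have hex : ∃ n, ∃ w : Fin 4 → ℤ, w ≠ 0 ∧ natHeight w ≤ n ∧ err Θ w < err Θ z := by
    obtain ⟨N, hN⟩ := exists_nat_one_div_lt (hpos z hz.ne_zero)
    obtain ⟨w, hw0, -, hw⟩ := exists_err_le_inv Θ (Nat.succ_pos N)
    refine ⟨natHeight w, w, ?_, le_rfl, hw.trans (by exact_mod_cast hN)⟩
    rintro rfl
    simp [natHeight] at hw0
  obtain ⟨w, hw0, hwn, hw⟩ := Nat.find_spec hex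
  have hmin := fun m (hm : m < Nat.find hex) => Nat.find_min hex hm
  generalize Nat.find hex = n at hwn hmin
  have hn : 0 < n := (natHeight_pos_of_err_lt_one hw0 (hw.trans hz.err_lt_one)).trans_le hwn
  obtain ⟨z', hz'0, hz'n, hz'1, hz'⟩ := exists_isLeast_err Θ hn
  have hlt : err Θ z' < err Θ z := (hz' w hw0 hwn).trans_lt hw
  refine ⟨z', ⟨hz'0, hz'1, fun w hw hwz => hz' w hw (hwz.trans hz'n)⟩, ?_, ?_, hpos _ hz'0, hlt, ?_⟩
  · rw [← natHeight_cast]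
    exact_mod_cast natHeight_pos_of_err_lt_one hz.ne_zero hz.err_lt_one
  · by_contra hle
    rw [← natHeight_cast, ← natHeight_cast, not_lt, Nat.cast_le] at hle
    exact (hz.err_le z' hz'0 hle).not_gt hlt
  · intro w hw hwz
    rw [← natHeight_cast, ← natHeight_cast, Nat.cast_lt] at hwz
    by_contra! h
    exact hmin _ (hwz.trans_le hz'n) ⟨w, hw, le_rfl, h⟩

lemma exists_consecutive_seq {Θ : Fin 2 → Fin 2 → ℝ} (hpos : ∀ w, w ≠ 0 → 0 < err Θ w) :
    ∃ z : ℕ → Fin 4 → ℤ, (∀ j, Consecutive Θ (z j) (z (j + 1))) ∧ ∀ j : ℕ, (j : ℝ) ≤ height (z j) := by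
  obtain ⟨z₀, h0, hle, h1, h2⟩ := exists_isLeast_err Θ one_pos
  have hz₀ : IsMinimalPoint Θ z₀ := ⟨h0, h1, fun w hw h => h2 w hw (h.trans hle)⟩
  choose! next hnext hcons using fun z (hz : IsMinimalPoint Θ z) => hz.exists_next hpos
  let z : ℕ → Fin 4 → ℤ := fun n => next^[n] z₀
  have hmin : ∀ j, IsMinimalPoint Θ (z j) := by
    intro j
    induction j with
    | zero => exact hz₀
    | succ j ih => simpa only [z, Function.iterate_succ_apply'] using hnext _ ih
  have hc : ∀ j, Consecutive Θ (z j) (z (j + 1)) := by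
    intro j
    simpa only [z, Function.iterate_succ_apply'] using hcons _ (hmin j)
  refine ⟨z, hc, fun j => ?_⟩
  have hmono : StrictMono fun j => natHeight (z j) := strictMono_nat_of_lt_succ fun j => by
    have := (hc j).height_lt
    rw [← natHeight_cast, ← natHeight_cast] at this
    exact_mod_cast this
  rw [← natHeight_cast]
  exact_mod_cast hmono.le_apply

/-! ### The irrationality measure function -/

lemma bddBelow_psiM_set (Θ : Fin 2 → Fin 2 → ℝ) (t : ℝ) :
    BddBelow {v : ℝ | ∃ x₁ x₂ : ℤ, 0 < max |x₁| |x₂| ∧ ((max |x₁| |x₂| : ℤ) : ℝ) ≤ t ∧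
      v = max (nint (Θ 0 0 * x₁ + Θ 0 1 * x₂)) (nint (Θ 1 0 * x₁ + Θ 1 1 * x₂))} :=
  ⟨0, by rintro _ ⟨x₁, x₂, -, -, rfl⟩; exact (abs_nonneg _).trans (le_max_left _ _)⟩

lemma psiM_le {Θ : Fin 2 → Fin 2 → ℝ} {w : Fin 4 → ℤ} {t : ℝ} (h0 : 0 < natHeight w)
    (ht : height w ≤ t) : psiM (Θ 0 0) (Θ 0 1) (Θ 1 0) (Θ 1 1) t ≤ err Θ w := by
  refine (csInf_le (bddBelow_psiM_set Θ t) ⟨w 0, w 1, ?_, ?_, rfl⟩).trans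
    ((err_roundVec Θ (w 0) (w 1)).symm.trans_le (err_roundVec_le Θ w))
  · simp [natHeight] at h0 ⊢; omega
  · simpa [height, xCoord] using ht

lemma Consecutive.le_psiM {Θ : Fin 2 → Fin 2 → ℝ} {u v : Fin 4 → ℤ} (h : Consecutive Θ u v)
    {t : ℝ} (h1 : 1 ≤ t) (ht : t < height v) :
    err Θ u ≤ psiM (Θ 0 0) (Θ 0 1) (Θ 1 0) (Θ 1 1) t := by
  refine le_csInf ⟨_, 1, 0, by simp, by simpa using h1, rfl⟩ ?_
  rintro _ ⟨x₁, x₂, hx, hxt, rfl⟩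
  rw [← err_roundVec]
  have hh : height (roundVec Θ x₁ x₂) = ((max |x₁| |x₂| : ℤ) : ℝ) := by
    simp [height, xCoord, roundVec]
  refine h.err_le _ ?_ (by rw [hh]; linarith)
  intro h0
  have hx : (0 : ℝ) < ((max |x₁| |x₂| : ℤ) : ℝ) := by exact_mod_cast hx
  rw [← hh, h0] at hx
  simp [height, xCoord] at hx

/-! ### The inequality between the exponents -/

lemma exists_bound_of_exponent_lt {η ω : ℝ} (c₁ c₂ c₃ : ℝ) (hη : 1 < η)
    (hf : ω ^ 2 + (η - 1) * ω - η * (2 * η ^ 2 - 2 * η + 1) < 0) :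
    ∃ A₀ : ℝ, ∀ A B Γ : ℝ, A ≤ B → B ≤ Γ → η * Γ ≤ ω * B + c₁ →
      η * A + (η - 1) * B ≤ Γ + c₂ → (η - 1) * B ≤ (ω - 1) * A + c₃ → A ≤ A₀ := by
  rcases lt_or_ge ω η with h | h
  · refine ⟨c₁ / (η - ω), fun A B Γ hAB hBΓ h1 _ _ => ?_⟩
    rw [le_div_iff₀ (by linarith)]
    nlinarith
  set u := ω - η ^ 2 + η with hu
  set c₄ := c₁ + η * c₂ with hc₄
  have main : ∀ A B Γ : ℝ, η * Γ ≤ ω * B + c₁ → η * A + (η - 1) * B ≤ Γ + c₂ →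
      η ^ 2 * A ≤ u * B + c₄ := by
    intro A B Γ h1 h2
    have := mul_le_mul_of_nonneg_left h2 (by linarith : 0 ≤ η)
    rw [hu, hc₄]
    linarith
  rcases le_or_gt u 0 with hu0 | hu0
  · refine ⟨max 0 (c₄ / η ^ 2), fun A B Γ hAB hBΓ h1 h2 _ => ?_⟩
    rcases le_total A 0 with hA | hA
    · exact hA.trans (le_max_left _ _)
    · refine le_trans ?_ (le_max_right _ _)
      rw [le_div_iff₀ (by positivity)]
      have := main A B Γ h1 h2
      nlinarith
  · have hpos : 0 < (η - 1) * η ^ 2 - u * (ω - 1) := by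
      rw [hu]
      nlinarith [mul_nonneg (sq_nonneg η) (sub_nonneg.2 h)]
    refine ⟨(u * c₃ + (η - 1) * c₄) / ((η - 1) * η ^ 2 - u * (ω - 1)),
      fun A B Γ hAB hBΓ h1 h2 h3 => ?_⟩
    rw [le_div_iff₀ hpos]
    have h4 := mul_le_mul_of_nonneg_left (main A B Γ h1 h2) (by linarith : 0 ≤ η - 1)
    have h5 := mul_le_mul_of_nonneg_left h3 hu0.le
    linarith

lemma not_uniform_and_not_ordinary {Θ : Fin 2 → Fin 2 → ℝ}
    (hindep : LinearIndependent ℚ ![(1 : ℝ), Θ 0 0, Θ 0 1, Θ 1 0, Θ 1 1])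
    (hpos : ∀ w, w ≠ 0 → 0 < err Θ w) {η ω C : ℝ} (hη : 1 < η)
    (hf : ω ^ 2 + (η - 1) * ω - η * (2 * η ^ 2 - 2 * η + 1) < 0)
    (hup : ∀ᶠ t : ℝ in atTop, t ^ η * psiM (Θ 0 0) (Θ 0 1) (Θ 1 0) (Θ 1 1) t ≤ C)
    (hlow : ∀ᶠ t : ℝ in atTop, 1 < t ^ ω * psiM (Θ 0 0) (Θ 0 1) (Θ 1 0) (Θ 1 1) t) : False := by
  obtain ⟨z, hz, hzj⟩ := exists_consecutive_seq hpos
  have htend : Tendsto (fun j => height (z j)) atTop atTop :=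
    tendsto_atTop_mono hzj tendsto_natCast_atTop_atTop
  have htlog : Tendsto (fun j => Real.log (height (z j))) atTop atTop :=
    Real.tendsto_log_atTop.comp htend
  have hX : ∀ j, 0 < height (z j) := fun j => (hz j).height_pos
  have hL : ∀ j, 0 < err Θ (z j) := fun j => (hz j).err_pos.trans (hz j).err_lt
  set c := Real.log C + η * Real.log 2 with hc
  have hupper : ∀ᶠ j in atTop,
      Real.log (err Θ (z j)) ≤ c - η * Real.log (height (z (j + 1))) := by
    have h1 := (htend.comp (tendsto_add_atTop_nat 1)).atTop_div_const (zero_lt_two' ℝ)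
    filter_upwards [h1.eventually hup, h1.eventually (eventually_ge_atTop 1)] with j hj hj1
    simp only [Function.comp_apply] at hj hj1
    set t := height (z (j + 1)) / 2 with ht
    have htp : 0 < t := by linarith
    have hle := (hz j).le_psiM hj1 (by rw [ht]; linarith [hX (j + 1)])
    have h2 : t ^ η * err Θ (z j) ≤ C :=
      (mul_le_mul_of_nonneg_left hle (Real.rpow_nonneg htp.le _)).trans hj
    have h3 := Real.log_le_log (mul_pos (Real.rpow_pos_of_pos htp _) (hL j)) h2
    rw [Real.log_mul (Real.rpow_pos_of_pos htp _).ne' (hL j).ne', Real.log_rpow htp, ht,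
      Real.log_div (hX _).ne' two_ne_zero] at h3
    rw [hc]
    linarith
  have hlower : ∀ᶠ j in atTop, -(ω * Real.log (height (z j))) ≤ Real.log (err Θ (z j)) := by
    filter_upwards [htend.eventually hlow] with j hj
    have h0 : 0 < natHeight (z j) := by
      have := hX j
      rw [← natHeight_cast] at this
      exact_mod_cast this
    have h1 : 1 ≤ height (z j) ^ ω * err Θ (z j) :=
      hj.le.trans (mul_le_mul_of_nonneg_left (psiM_le h0 le_rfl) (Real.rpow_nonneg (hX j).le _))
    have h2 := Real.log_nonneg h1
    rw [Real.log_mul (Real.rpow_pos_of_pos (hX j) _).ne' (hL j).ne', Real.log_rpow (hX j)] at h2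
    linarith
  have hhyp : ∀ f : (Fin 4 → ℚ) →ₗ[ℚ] ℚ, f ≠ 0 → ∀ N, ∃ j ≥ N, f (ratVec (z j)) ≠ 0 := by
    intro f hf0 N
    obtain ⟨δ, hδ, hδf⟩ := exists_pos_forall_functional_eq_zero hindep hf0
    obtain ⟨j, hj, hjN, hjδ⟩ := (hupper.and ((eventually_ge_atTop N).and
      ((htlog.comp (tendsto_add_atTop_nat 1)).eventually
        (eventually_gt_atTop ((c - Real.log δ) / (η - 1)))))).exists
    simp only [Function.comp_apply] at hjδ
    rw [div_lt_iff₀ (by linarith)] at hjδ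
    have hsmall : height (z (j + 1)) * err Θ (z j) < δ := by
      rw [← Real.log_lt_log_iff (hz j).mul_pos hδ, Real.log_mul (hX _).ne' (hL j).ne']
      linarith
    by_cases h : f (ratVec (z j)) = 0
    · exact ⟨j + 1, by omega, hδf _ _ (hz j) hsmall h⟩
    · exact ⟨j, hjN, h⟩
  obtain ⟨A₀, hA₀⟩ := exists_bound_of_exponent_lt c (Real.log 24 + 2 * c) (Real.log 8 + c) hη hf
  obtain ⟨N, hN⟩ := eventually_atTop.1 (hupper.and (hlower.and
    (htlog.eventually (eventually_gt_atTop A₀))))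
  obtain ⟨j, l, hNj, hjl, hl1, hl2, hli⟩ :=
    exists_plane_stretch (s := fun j => ratVec (z j)) (fun j => (hz j).linearIndependent) hhyp N
  have hXm : StrictMono fun j => height (z j) := strictMono_nat_of_lt_succ fun j => (hz j).height_lt
  have hLm : StrictAnti fun j => err Θ (z j) := strictAnti_nat_of_succ_lt fun j => (hz j).err_lt
  have hXlog : ∀ {i k}, i ≤ k → Real.log (height (z i)) ≤ Real.log (height (z k)) :=
    fun h => Real.log_le_log (hX _) (hXm.monotone h)
  have hplane := Real.log_le_log (hz (j + 1)).mul_pos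
    ((hz (j + 1)).mul_le_of_mem_span (hz l) hl1 hl2)
  have hdet := Real.log_nonneg (one_le_of_linearIndependent Θ (hXm.monotone hjl.le)
    (hXm.monotone (by omega : l ≤ l + 1)) (hXm.monotone (by omega : l + 1 ≤ l + 2))
    (hLm.antitone hjl.le) (hLm.antitone (by omega : l ≤ l + 1))
    (hLm.antitone (by omega : l + 1 ≤ l + 2)) hli)
  rw [Real.log_mul (hX _).ne' (hL _).ne', Real.log_mul (by norm_num) (hz l).mul_pos.ne',
    Real.log_mul (hX _).ne' (hL _).ne'] at hplane
  have h1 := hX (l + 2)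
  have h2 := hX (l + 1)
  have h3 := hL l
  have h4 := hL j
  rw [Real.log_mul (by norm_num) (by positivity), Real.log_mul (by positivity) (by positivity),
    Real.log_mul (by positivity) (by positivity), Real.log_mul (by positivity) (by positivity)]
    at hdet
  obtain ⟨uj, -, -⟩ := hN j hNj
  obtain ⟨-, lj, Aj⟩ := hN (j + 1) (by omega)
  obtain ⟨ul, -, -⟩ := hN l (by omega)
  obtain ⟨ul', ll', -⟩ := hN (l + 1) (by omega)
  have hAA := hXlog (by omega : j + 1 ≤ j + 2)
  refine Aj.not_ge (hA₀ _ _ _ (hXlog (by omega : j + 1 ≤ l + 1))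
    (hXlog (by omega : l + 1 ≤ l + 2)) ?_ ?_ ?_)
  · linarith
  · linarith
  · linarith

lemma err_pos_of_ne_zero {Θ : Fin 2 → Fin 2 → ℝ}
    (hgood : ∀ x₁ x₂ : ℤ, ¬(x₁ = 0 ∧ x₂ = 0) →
      ¬∃ y₁ y₂ : ℤ, Θ 0 0 * x₁ + Θ 0 1 * x₂ = (y₁ : ℝ) ∧ Θ 1 0 * x₁ + Θ 1 1 * x₂ = (y₂ : ℝ))
    (w : Fin 4 → ℤ) (hw : w ≠ 0) : 0 < err Θ w := by
  by_contra hle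
  have h0 : err Θ w < 1 := by linarith
  have hh := natHeight_pos_of_err_lt_one hw h0
  have hl : ∀ m, linForm Θ w m = 0 := fun m =>
    abs_eq_zero.1 (le_antisymm ((abs_linForm_le Θ w m).trans (not_lt.1 hle)) (abs_nonneg _))
  refine hgood (w 0) (w 1) (by simp [natHeight] at hh; omega) ⟨w 2, w 3, ?_, ?_⟩
  · have := hl 0
    simp [linForm] at this
    linarith
  · have := hl 1
    simp [linForm] at this
    linarith

lemma frequently_mul_psiM_le (Θ : Fin 2 → Fin 2 → ℝ) :
    ∃ᶠ t : ℝ in atTop, t ^ (1 : ℝ) * psiM (Θ 0 0) (Θ 0 1) (Θ 1 0) (Θ 1 1) t ≤ 1 := by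
  rw [frequently_atTop]
  intro a
  obtain ⟨N, hN⟩ := exists_nat_ge (max a 1)
  have hN1 : (0 : ℝ) < N := by linarith [le_max_right a 1]
  obtain ⟨w, hw0, hwN, hw⟩ := exists_err_le_inv Θ (N := N) (by exact_mod_cast hN1)
  refine ⟨N, (le_max_left _ _).trans hN, ?_⟩
  have := psiM_le (Θ := Θ) hw0 (t := N) (by rw [← natHeight_cast]; exact_mod_cast hwN)
  rw [Real.rpow_one, mul_comm, ← le_div_iff₀ hN1]
  exact this.trans hw.le

/-- Moshchevitin's improvement of Jarník's inequality for `m = n = 2`: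
`ω ≥ (1 − ω̂ + √((1 − ω̂)² + 4ω̂(2ω̂² − 2ω̂ + 1)))/2`.
The conclusion `ω ≥ RHS`, where `ω = sup{γ ≥ 0 : liminf t^γ ψ(t) < ∞}` (possibly `+∞`),
is expressed as: every real `x < RHS` is exceeded by some element of that set. -/
theorem stmt19 (θ11 θ12 θ21 θ22 : ℝ)
    (hindep : LinearIndependent ℚ ![(1 : ℝ), θ11, θ12, θ21, θ22])
    (hgood : ∀ x₁ x₂ : ℤ, ¬(x₁ = 0 ∧ x₂ = 0) →
      ¬∃ y₁ y₂ : ℤ, θ11 * x₁ + θ12 * x₂ = (y₁ : ℝ) ∧ θ21 * x₁ + θ22 * x₂ = (y₂ : ℝ))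
    (omegaHat : ℝ)
    (homegaHat : IsLUB {γ : ℝ | 0 ≤ γ ∧ ∃ C : ℝ,
      ∀ᶠ t : ℝ in atTop, t ^ γ * psiM θ11 θ12 θ21 θ22 t ≤ C} omegaHat) :
    ∀ x : ℝ,
      x < (1 - omegaHat + Real.sqrt ((1 - omegaHat) ^ 2 +
        4 * omegaHat * (2 * omegaHat ^ 2 - 2 * omegaHat + 1))) / 2 →
      ∃ γ : ℝ, (0 ≤ γ ∧ ∃ C : ℝ,
        ∃ᶠ t : ℝ in atTop, t ^ γ * psiM θ11 θ12 θ21 θ22 t ≤ C) ∧ x < γ := by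
  intro x hx
  by_contra hno
  let Θ : Fin 2 → Fin 2 → ℝ := ![![θ11, θ12], ![θ21, θ22]]
  have hfreq := frequently_mul_psiM_le Θ
  have hx1 : 1 ≤ x := by
    by_contra h
    exact hno ⟨1, ⟨zero_le_one, 1, hfreq⟩, not_le.1 h⟩
  have hω1 : 1 < omegaHat := by
    by_contra! hle
    have h0 : 0 ≤ omegaHat := by
      obtain ⟨γ, hγ⟩ := homegaHat.nonempty
      exact hγ.1.trans (homegaHat.1 hγ)
    have hs : Real.sqrt ((1 - omegaHat) ^ 2 +
        4 * omegaHat * (2 * omegaHat ^ 2 - 2 * omegaHat + 1)) ≤ 1 + omegaHat := by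
      refine Real.sqrt_le_iff.2 ⟨by linarith, ?_⟩
      nlinarith [mul_nonneg (mul_nonneg h0 h0) (sub_nonneg.2 hle)]
    linarith
  let P : ℝ → ℝ → ℝ := fun ω η => ω ^ 2 + (η - 1) * ω - η * (2 * η ^ 2 - 2 * η + 1)
  obtain ⟨ω, hxω, hω⟩ := exists_between hx
  have hP : P ω omegaHat < 0 := by
    have h1 : 2 * ω - (1 - omegaHat) < Real.sqrt ((1 - omegaHat) ^ 2 +
        4 * omegaHat * (2 * omegaHat ^ 2 - 2 * omegaHat + 1)) := by linarith
    have h2 := (Real.lt_sqrt (by linarith)).1 h1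
    simp only [P]
    linarith
  have hcont : Continuous fun η => P ω η := by fun_prop
  have hev : ∀ᶠ η in nhdsWithin omegaHat (Set.Iio omegaHat), P ω η < 0 ∧ 1 < η ∧ η < omegaHat :=
    ((hcont.continuousAt.eventually_lt continuousAt_const hP).filter_mono nhdsWithin_le_nhds).and
      (((eventually_gt_nhds hω1).filter_mono nhdsWithin_le_nhds).and self_mem_nhdsWithin)
  obtain ⟨η, hPη, hη1, hηlt⟩ := hev.exists
  obtain ⟨γ, ⟨-, C, hC⟩, hγ⟩ := (lt_isLUB_iff homegaHat).1 hηlt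
  have hpsi0 : ∀ t, 0 ≤ psiM θ11 θ12 θ21 θ22 t := fun t => Real.sInf_nonneg (by
    rintro _ ⟨x₁, x₂, -, -, rfl⟩
    exact (abs_nonneg _).trans (le_max_left _ _))
  refine not_uniform_and_not_ordinary (Θ := Θ) hindep (err_pos_of_ne_zero hgood) (η := η)
    (ω := ω) (C := C) hη1 hPη ?_ ?_
  · filter_upwards [hC, eventually_ge_atTop 1] with t ht ht1
    exact (mul_le_mul_of_nonneg_right (Real.rpow_le_rpow_of_exponent_le ht1 hγ.le)
      (hpsi0 t)).trans ht
  · by_contra h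
    refine hno ⟨ω, ⟨by linarith, 1, ?_⟩, hxω⟩
    rw [not_eventually] at h
    exact h.mono fun t ht => not_lt.1 ht
end
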